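/- Every 5-edge-connected graph with at most seven edge-cuts of size 5 is Z_3-connected. -/

import Mathlib

open Finset

/-- A finite multigraph without loops: each edge `e` has two distinct
endpoints `fst e` and `snd e`.  An orientation is a map `D : E → Bool`,
where `D e = true` means `e` is directed from `fst e` to `snd e`. -/
structure Multigraph (V : Type) (E : Type) where
  fst : E → V
  snd : E → V
  no_loop : ∀ e, fst e ≠ snd e

namespace Multigraph

variable {V E : Type} [Fintype V] [DecidableEq V] [Fintype E] [DecidableEq E]

/-- The tail (initial vertex) of edge `e` under orientation `D`. -/
def tail (G : Multigraph V E) (D : E → Bool) (e : E) : V :=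
  if D e then G.fst e else G.snd e

/-- The head (terminal vertex) of edge `e` under orientation `D`. -/
def head (G : Multigraph V E) (D : E → Bool) (e : E) : V :=
  if D e then G.snd e else G.fst e

/-- Outdegree `d⁺_D(v)` (as an integer, for convenience). -/
def outDeg (G : Multigraph V E) (D : E → Bool) (v : V) : ℤ :=
  ((univ.filter fun e => G.tail D e = v).card : ℤ)

/-- Indegree `d⁻_D(v)`. -/
def inDeg (G : Multigraph V E) (D : E → Bool) (v : V) : ℤ :=
  ((univ.filter fun e => G.head D e = v).card : ℤ)

/-- `e` is incident with `v`. -/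
def Incident (G : Multigraph V E) (v : V) (e : E) : Prop :=
  G.fst e = v ∨ G.snd e = v

instance (G : Multigraph V E) (v : V) : DecidablePred (G.Incident v) := fun e =>
  inferInstanceAs (Decidable (G.fst e = v ∨ G.snd e = v))

/-- The degree of a vertex. -/
def degree (G : Multigraph V E) (v : V) : ℕ :=
  (univ.filter fun e => G.Incident v e).card

/-- The edge-cut `∂_G(A)`: edges with exactly one endpoint in `A`. -/
def cut (G : Multigraph V E) (A : Finset V) : Finset E :=
  univ.filter fun e => ¬ ((G.fst e ∈ A) ↔ (G.snd e ∈ A))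

/-- `G` is `k`-edge-connected: every edge-cut has at least `k` edges. -/
def EdgeConnected (G : Multigraph V E) (k : ℕ) : Prop :=
  ∀ A : Finset V, A.Nonempty → A ≠ univ → k ≤ (G.cut A).card

/-- A boundary function: values in `ℤ₃` summing to `0`. -/
def IsBoundary (β : V → ZMod 3) : Prop := ∑ v, β v = 0

/-- `D` is a `β`-orientation: `d⁺(v) - d⁻(v) ≡ β v (mod 3)` at every vertex. -/
def IsBetaOrientation (G : Multigraph V E) (β : V → ZMod 3) (D : E → Bool) : Prop :=
  ∀ v : V, ((G.outDeg D v - G.inDeg D v : ℤ) : ZMod 3) = β v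

/-- A mod 3-orientation: `d⁺(v) ≡ d⁻(v) (mod 3)` at every vertex. -/
def IsMod3Orientation (G : Multigraph V E) (D : E → Bool) : Prop :=
  ∀ v : V, ((G.outDeg D v - G.inDeg D v : ℤ) : ZMod 3) = 0

/-- `G` admits a mod 3-orientation (equivalently, a nowhere-zero 3-flow). -/
def Mod3Orientable (G : Multigraph V E) : Prop := ∃ D, G.IsMod3Orientation D

/-- `G` is `ℤ₃`-connected. -/
def Z3Connected (G : Multigraph V E) : Prop :=
  ∀ β : V → ZMod 3, IsBoundary β → ∃ D, G.IsBetaOrientation β D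

/-- `G` is `ℤ₃`-extendable at `x`: every pre-orientation of the edges at `x`
compatible with `β x` extends to a `β`-orientation of `G`. -/
def Z3ExtendableAt (G : Multigraph V E) (x : V) : Prop :=
  ∀ β : V → ZMod 3, IsBoundary β →
    ∀ D₀ : E → Bool, ((G.outDeg D₀ x - G.inDeg D₀ x : ℤ) : ZMod 3) = β x →
      ∃ D : E → Bool, (∀ e, G.Incident x e → D e = D₀ e) ∧ G.IsBetaOrientation β D

/-- `G` is mod-3-extendable at `x`: every pre-orientation of `∂(x)` with
`d⁺(x) ≡ d⁻(x) (mod 3)` extends to a mod 3-orientation of `G`. -/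
def Mod3ExtendableAt (G : Multigraph V E) (x : V) : Prop :=
  ∀ D₀ : E → Bool, ((G.outDeg D₀ x - G.inDeg D₀ x : ℤ) : ZMod 3) = 0 →
    ∃ D : E → Bool, (∀ e, G.Incident x e → D e = D₀ e) ∧ G.IsMod3Orientation D

/-- `A` is a `k`-critical-set: `d(A) ≤ k` but every nonempty proper subset has
larger boundary. -/
def CriticalSet (G : Multigraph V E) (k : ℕ) (A : Finset V) : Prop :=
  A.Nonempty ∧ A ≠ univ ∧ (G.cut A).card ≤ k ∧
    ∀ B : Finset V, B.Nonempty → B ⊂ A → k < (G.cut B).card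

/-- The set of edge-cuts of size exactly `k` (as sets of edges). -/
def kCuts (G : Multigraph V E) (k : ℕ) : Finset (Finset E) :=
  ((univ : Finset (Finset V)).filter
    fun A => A.Nonempty ∧ A ≠ univ ∧ (G.cut A).card = k).image G.cut

end Multigraph

/-!
Joining a new vertex to one vertex of each 5-critical set makes the graph 6-edge-connected.
Uncrossing shows that the critical sets are disjoint and, having different cuts unless two of them
partition the vertex set, there are at most seven of them. So the theorem reduces to the extension
theorem of Lovász, Thomassen, Wu and Zhang for a special vertex of degree at most seven, whose
edges are already directed. Without its special vertex, such a graph is a graph with directed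
stubs. Every orientation has net outflow congruent to the degree modulo 2, so that the prescription
modulo 3 becomes one modulo 6, and the degree condition reads `4 + sixNorm (demand A) ≤ degree A`.

In a minimal counterexample, no proper set of at least two vertices satisfies this condition with
equality, since such a set could be contracted and then solved by itself; and no vertex has degree
four and target zero, since it could be split off. Every vertex then has room to emit or to absorb
one unit. An edge from an emitter to an absorber could be directed and deleted, so by symmetry all
vertices can emit and none can absorb. Then all stubs point inwards, since an outgoing stub could
be deleted, and finally an edge can be exchanged for a stub, unless there are no stubs, in which
case the degree of the complement of a vertex is too small.
-/

/-- The distance from `x` to the nearest multiple of six. -/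
def sixNorm (x : ℤ) : ℤ := min (x % 6) (-x % 6)

theorem sixNorm_neg (x : ℤ) : sixNorm (-x) = sixNorm x := by unfold sixNorm; omega

theorem two_dvd_sixNorm_sub (x : ℤ) : 2 ∣ sixNorm x - x := by unfold sixNorm; omega

theorem sixNorm_eq_of_dvd_sub {x y : ℤ} (h : 6 ∣ x - y) : sixNorm x = sixNorm y := by
  unfold sixNorm; omega

theorem sixNorm_add_le (x y : ℤ) : sixNorm (x + y) ≤ sixNorm x + sixNorm y := by
  unfold sixNorm; omega

/-- The integer indicator function of a finite set. -/
def ind {V : Type*} [DecidableEq V] (A : Finset V) (v : V) : ℤ := if v ∈ A then 1 else 0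

section ind

variable {V : Type*} [DecidableEq V]

theorem ind_eq_zero_or_one (A : Finset V) (v : V) : ind A v = 0 ∨ ind A v = 1 := by
  unfold ind; split_ifs <;> simp

theorem ind_of_mem {A : Finset V} {v : V} (h : v ∈ A) : ind A v = 1 := if_pos h

theorem ind_of_notMem {A : Finset V} {v : V} (h : v ∉ A) : ind A v = 0 := if_neg h

theorem ind_insert {A : Finset V} {v : V} (hv : v ∉ A) (u : V) :
    ind (insert v A) u = ind A u + ind {v} u := by
  by_cases h : u = v <;> simp [ind, h, hv]

theorem ind_singleton_eq_one {u v : V} : ind {u} v = 1 ↔ v = u := by simp [ind]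

theorem sum_ind (A B : Finset V) : ∑ v ∈ A, ind B v = #(A ∩ B) := by
  simp [ind, sum_ite_mem]

theorem sum_ind_singleton (A : Finset V) (v : V) : ∑ u ∈ A, ind {v} u = ind A v := by
  simp [ind]

theorem sum_ind_singleton_comm (A : Finset V) (v : V) : ∑ u ∈ A, ind {u} v = ind A v := by
  simp [ind]

end ind

/-- A finite multigraph, loops allowed, in which every vertex `v` carries `stubs v` half-edges
that are already directed, with net outflow `stubFlow v`, and is assigned the net outflow
`target v` modulo 6. Vertices and edges are finite subsets of ambient types, so that contracting,
restricting and splitting off do not change the types; stub counts are integers because the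
reductions subtract them. -/
structure StubGraph (V E : Type*) where
  verts : Finset V
  edges : Finset E
  fst : E → V
  snd : E → V
  stubs : V → ℤ
  stubFlow : V → ℤ
  target : V → ℤ

namespace StubGraph

section Basic

variable {V E : Type*} [DecidableEq V]

/-- The net amount by which the reference direction of `e` leaves `A`: `1`, `-1` or `0`. -/
def crossing (P : StubGraph V E) (A : Finset V) (e : E) : ℤ := ind A (P.fst e) - ind A (P.snd e)

/-- The number of edges with exactly one end in `A`. -/
def cutSize (P : StubGraph V E) (A : Finset V) : ℤ := ∑ e ∈ P.edges, |P.crossing A e|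

/-- The number of edges and stubs leaving `A`. -/
def degree (P : StubGraph V E) (A : Finset V) : ℤ := P.cutSize A + ∑ v ∈ A, P.stubs v

/-- The net outflow prescribed for the set `A`. -/
def demand (P : StubGraph V E) (A : Finset V) : ℤ := ∑ v ∈ A, P.target v

/-- The net outflow from `A` along the edges, when `σ e = 1` keeps the reference direction of `e`
and `σ e = -1` reverses it. -/
def netFlow (P : StubGraph V E) (σ : E → ℤˣ) (A : Finset V) : ℤ :=
  ∑ e ∈ P.edges, σ e * P.crossing A e

/-- The part of the demand of `A` that neither its stubs nor the orientation `σ` provides. -/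
def residual (P : StubGraph V E) (σ : E → ℤˣ) (A : Finset V) : ℤ :=
  ∑ v ∈ A, (P.target v - P.stubFlow v) - P.netFlow σ A

/-- Some orientation of the edges meets every demand modulo 6. -/
def Solvable (P : StubGraph V E) : Prop :=
  ∃ σ : E → ℤˣ, ∀ v ∈ P.verts, 6 ∣ P.residual σ {v}

/-- The edge `e` joins `v` to `y`; its reference direction leads from `v` to `y` if `δ = 1` and
from `y` to `v` if `δ = -1`. -/
def Joins (P : StubGraph V E) (e : E) (v y : V) (δ : ℤˣ) : Prop :=
  ∀ A, P.crossing A e = δ * (ind A v - ind A y)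

/-- The parity and divisibility conditions without which no orientation can meet the demands. -/
structure Consistent (P : StubGraph V E) : Prop where
  fst_mem : ∀ e ∈ P.edges, P.fst e ∈ P.verts
  snd_mem : ∀ e ∈ P.edges, P.snd e ∈ P.verts
  abs_stubFlow_le : ∀ v ∈ P.verts, |P.stubFlow v| ≤ P.stubs v
  two_dvd_stubs_sub : ∀ v ∈ P.verts, 2 ∣ P.stubs v - P.stubFlow v
  two_dvd_degree_sub : ∀ v ∈ P.verts, 2 ∣ P.degree {v} - P.target v
  six_dvd_sum : 6 ∣ ∑ v ∈ P.verts, (P.target v - P.stubFlow v)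

/-- The edges and stubs leaving `A` are too few to make `A` more than just admissible. -/
def Tight (P : StubGraph V E) (A : Finset V) : Prop := P.degree A ≤ 4 + sixNorm (P.demand A)

/-- The degree condition of Lovász, Thomassen, Wu and Zhang. The stubs play the part of the edges
at their special vertex, so tightness of the whole vertex set bounds the degree of that vertex. -/
structure Admissible (P : StubGraph V E) : Prop extends Consistent P where
  tight_verts : P.Tight P.verts
  le_degree : ∀ A ⊆ P.verts, A.Nonempty → A ≠ P.verts → 4 + sixNorm (P.demand A) ≤ P.degree A

variable {P : StubGraph V E} {A B : Finset V} {e : E} {v y : V} {δ : ℤˣ}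

theorem crossing_eq_zero_or (P : StubGraph V E) (A : Finset V) (e : E) :
    P.crossing A e = 0 ∨ P.crossing A e = 1 ∨ P.crossing A e = -1 := by
  unfold crossing ind; split_ifs <;> simp

theorem crossing_eq_sum (P : StubGraph V E) (A : Finset V) (e : E) :
    P.crossing A e = ∑ v ∈ A, P.crossing {v} e := by
  simp only [crossing, sum_sub_distrib, sum_ind_singleton_comm]

theorem crossing_insert (hv : v ∉ A) : P.crossing (insert v A) e =
    P.crossing A e + P.crossing {v} e := by
  simp only [crossing, ind_insert hv]; ring

theorem crossing_eq_zero_of_iff (h : P.fst e ∈ A ↔ P.snd e ∈ A) : P.crossing A e = 0 := by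
  simp [crossing, ind, h]

theorem sum_abs_crossing_singleton (h : ¬(P.fst e ∈ A ∧ P.snd e ∈ A)) :
    ∑ v ∈ A, |P.crossing {v} e| = |P.crossing A e| := by
  rw [crossing_eq_sum]
  rcases not_and_or.1 h with hf | hs
  · have hle : ∀ v ∈ A, P.crossing {v} e ≤ 0 := fun v hv => by
      have := ind_eq_zero_or_one {v} (P.snd e)
      rw [crossing, ind_of_notMem (by rintro h; exact hf (mem_singleton.1 h ▸ hv))]
      omega
    rw [abs_of_nonpos (sum_nonpos hle), ← sum_neg_distrib]
    exact sum_congr rfl fun v hv => abs_of_nonpos (hle v hv)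
  · have hge : ∀ v ∈ A, 0 ≤ P.crossing {v} e := fun v hv => by
      have := ind_eq_zero_or_one {v} (P.fst e)
      rw [crossing, ind_of_notMem (v := P.snd e) (by rintro h; exact hs (mem_singleton.1 h ▸ hv))]
      omega
    rw [abs_of_nonneg (sum_nonneg hge)]
    exact sum_congr rfl fun v hv => abs_of_nonneg (hge v hv)

theorem cutSize_nonneg (P : StubGraph V E) (A : Finset V) : 0 ≤ P.cutSize A :=
  sum_nonneg fun _ _ => abs_nonneg _

theorem card_filter_crossing_ne_zero (P : StubGraph V E) (A : Finset V) :
    (#{e ∈ P.edges | P.crossing A e ≠ 0} : ℤ) = P.cutSize A := by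
  rw [card_filter, cutSize]
  push_cast
  refine sum_congr rfl fun e _ => ?_
  rcases P.crossing_eq_zero_or A e with h | h | h <;> simp [h]

theorem exists_crossing_ne_zero (h : 0 < P.cutSize A) : ∃ e ∈ P.edges, P.crossing A e ≠ 0 := by
  rw [← card_filter_crossing_ne_zero, Nat.cast_pos] at h
  simpa [Finset.Nonempty] using card_pos.1 h

theorem degree_singleton (P : StubGraph V E) (v : V) :
    P.degree {v} = P.cutSize {v} + P.stubs v := by
  rw [degree, sum_singleton]

theorem demand_singleton {V E : Type*} (P : StubGraph V E) (v : V) : P.demand {v} = P.target v :=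
  sum_singleton _ _

theorem demand_insert (hv : v ∉ A) : P.demand (insert v A) = P.target v + P.demand A :=
  sum_insert hv

theorem netFlow_eq_sum (P : StubGraph V E) (σ : E → ℤˣ) (A : Finset V) :
    P.netFlow σ A = ∑ v ∈ A, P.netFlow σ {v} := by
  simp only [netFlow]
  rw [sum_comm]
  exact sum_congr rfl fun e _ => by rw [crossing_eq_sum, mul_sum]

theorem residual_eq_sum (P : StubGraph V E) (σ : E → ℤˣ) (A : Finset V) :
    P.residual σ A = ∑ v ∈ A, P.residual σ {v} := by
  simp only [residual, sum_singleton, sum_sub_distrib, ← netFlow_eq_sum]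

theorem two_dvd_cutSize_sub_netFlow (P : StubGraph V E) (σ : E → ℤˣ) (A : Finset V) :
    2 ∣ P.cutSize A - P.netFlow σ A := by
  rw [cutSize, netFlow, ← sum_sub_distrib]
  refine dvd_sum fun e _ => ?_
  rcases Int.units_eq_one_or (σ e) with h | h <;>
    rcases P.crossing_eq_zero_or A e with h' | h' | h' <;> simp [h, h']

theorem Joins.abs_crossing (h : P.Joins e v y δ) (A : Finset V) :
    |P.crossing A e| = |ind A v - ind A y| := by
  rw [h A, abs_mul]
  rcases Int.units_eq_one_or δ with rfl | rfl <;> simp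

end Basic

section Consistent

variable {V E : Type*} [DecidableEq V] {P : StubGraph V E} {A : Finset V} {e : E} {v : V}

namespace Consistent

theorem crossing_verts (hP : P.Consistent) (he : e ∈ P.edges) : P.crossing P.verts e = 0 :=
  crossing_eq_zero_of_iff (by simp [hP.fst_mem e he, hP.snd_mem e he])

theorem cutSize_verts (hP : P.Consistent) : P.cutSize P.verts = 0 :=
  sum_eq_zero fun e he => by rw [hP.crossing_verts he, abs_zero]

theorem netFlow_verts (hP : P.Consistent) (σ : E → ℤˣ) : P.netFlow σ P.verts = 0 :=
  sum_eq_zero fun e he => by rw [hP.crossing_verts he, mul_zero]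

theorem degree_verts (hP : P.Consistent) : P.degree P.verts = ∑ v ∈ P.verts, P.stubs v := by
  rw [degree, hP.cutSize_verts, zero_add]

theorem stubs_nonneg (hP : P.Consistent) (hv : v ∈ P.verts) : 0 ≤ P.stubs v :=
  (abs_nonneg _).trans (hP.abs_stubFlow_le v hv)

theorem exists_joins (hP : P.Consistent) (he : e ∈ P.edges) (h : P.crossing A e ≠ 0) :
    ∃ v ∈ A, ∃ y ∈ P.verts \ A, ∃ δ, P.Joins e v y δ := by
  have hf := hP.fst_mem e he
  have hs := hP.snd_mem e he
  by_cases hfA : P.fst e ∈ A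
  · refine ⟨_, hfA, P.snd e, mem_sdiff.2 ⟨hs, fun hsA => h ?_⟩, 1, fun B => by simp [crossing]⟩
    exact crossing_eq_zero_of_iff (by simp [hfA, hsA])
  · refine ⟨P.snd e, ?_, P.fst e, mem_sdiff.2 ⟨hf, hfA⟩, -1, fun B => by simp [crossing]⟩
    by_contra hsA
    exact h (crossing_eq_zero_of_iff (by simp [hfA, hsA]))

theorem six_dvd_residual_verts (hP : P.Consistent) (σ : E → ℤˣ) :
    6 ∣ P.residual σ P.verts := by
  rw [residual, hP.netFlow_verts, sub_zero]
  exact hP.six_dvd_sum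

theorem cutSize_sdiff (hP : P.Consistent) (A : Finset V) :
    P.cutSize (P.verts \ A) = P.cutSize A := by
  refine sum_congr rfl fun e he => ?_
  have hf := hP.fst_mem e he
  have hs := hP.snd_mem e he
  by_cases h₁ : P.fst e ∈ A <;> by_cases h₂ : P.snd e ∈ A <;> simp [crossing, ind, hf, hs, h₁, h₂]

theorem two_dvd_degree_sub_demand (hP : P.Consistent) (hA : A ⊆ P.verts) :
    2 ∣ P.degree A - P.demand A := by
  have hsplit : P.degree A - P.demand A = P.cutSize A - P.netFlow 1 A +
      ∑ v ∈ A, (P.degree {v} - P.target v) - ∑ v ∈ A, (P.cutSize {v} - P.netFlow 1 {v}) := by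
    simp only [degree_singleton, degree.eq_1 P A, demand, netFlow_eq_sum P 1 A, sum_sub_distrib,
      sum_add_distrib]
    ring
  rw [hsplit]
  exact ((two_dvd_cutSize_sub_netFlow P 1 A).add (dvd_sum fun v hv =>
    hP.two_dvd_degree_sub v (hA hv))).sub (dvd_sum fun v _ => two_dvd_cutSize_sub_netFlow P 1 {v})

theorem six_add_le_degree (hP : P.Consistent) (hA : A ⊆ P.verts) (h : ¬P.Tight A) :
    6 + sixNorm (P.demand A) ≤ P.degree A := by
  have hpar := hP.two_dvd_degree_sub_demand hA
  have hnorm := two_dvd_sixNorm_sub (P.demand A)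
  have hgap : 4 + sixNorm (P.demand A) < P.degree A := not_le.1 h
  omega

end Consistent

end Consistent

section Neg

variable {V E : Type*} [DecidableEq V] {P : StubGraph V E}

/-- The mirror image of `P`, in which all directions are reversed. -/
def neg (P : StubGraph V E) : StubGraph V E :=
  { P with stubFlow := -P.stubFlow, target := -P.target }

theorem demand_neg {V E : Type*} (P : StubGraph V E) (A : Finset V) :
    P.neg.demand A = -P.demand A :=
  sum_neg_distrib _

theorem residual_neg (P : StubGraph V E) (σ : E → ℤˣ) (A : Finset V) :
    P.neg.residual σ A = -P.residual (-σ) A := by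
  have hflow : P.neg.netFlow σ A = -P.netFlow (-σ) A := by
    simp [netFlow, neg, crossing, ← sum_neg_distrib]
  rw [residual, residual, hflow]
  simp only [neg, Pi.neg_apply, sum_sub_distrib, sum_neg_distrib]
  ring

theorem Solvable.of_neg (h : P.neg.Solvable) : P.Solvable := by
  obtain ⟨σ, hσ⟩ := h
  exact ⟨-σ, fun v hv => (dvd_neg.2 (hσ v hv)).trans (by rw [residual_neg, neg_neg])⟩

theorem tight_neg {A : Finset V} : P.neg.Tight A ↔ P.Tight A := by
  rw [Tight, demand_neg, sixNorm_neg]; rfl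

theorem Admissible.neg (hP : P.Admissible) : P.neg.Admissible where
  fst_mem := hP.fst_mem
  snd_mem := hP.snd_mem
  abs_stubFlow_le v hv := (abs_neg _).trans_le (hP.abs_stubFlow_le v hv)
  two_dvd_stubs_sub v hv := by
    have := hP.two_dvd_stubs_sub v hv
    simp only [StubGraph.neg, Pi.neg_apply]; omega
  two_dvd_degree_sub v hv := by
    have : 2 ∣ P.degree {v} - P.target v := hP.two_dvd_degree_sub v hv
    change 2 ∣ P.degree {v} - -P.target v
    omega
  six_dvd_sum := by
    simpa only [StubGraph.neg, Pi.neg_apply, ← neg_sub', sum_neg_distrib, dvd_neg]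
      using hP.six_dvd_sum
  tight_verts := tight_neg.2 hP.tight_verts
  le_degree A hA hne hne' := by
    rw [demand_neg, sixNorm_neg]
    exact hP.le_degree A hA hne hne'

end Neg

section Contract

variable {V V' E : Type*} [DecidableEq V] [DecidableEq V'] {P : StubGraph V E} {c : V → V'}

/-- The graph obtained by identifying the vertices with the same image under `c`. -/
def contract (P : StubGraph V E) (c : V → V') : StubGraph V' E where
  verts := P.verts.image c
  edges := P.edges
  fst := c ∘ P.fst
  snd := c ∘ P.snd
  stubs u := ∑ v ∈ P.verts with c v = u, P.stubs v
  stubFlow u := ∑ v ∈ P.verts with c v = u, P.stubFlow v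
  target u := ∑ v ∈ P.verts with c v = u, P.target v

theorem demand_contract {V : Type*} (P : StubGraph V E) (c : V → V') (A : Finset V') :
    (P.contract c).demand A = P.demand {v ∈ P.verts | c v ∈ A} :=
  sum_fiberwise_eq_sum_filter _ _ _ _

namespace Consistent

theorem crossing_contract (hP : P.Consistent) (A : Finset V') {e : E} (he : e ∈ P.edges) :
    (P.contract c).crossing A e = P.crossing {v ∈ P.verts | c v ∈ A} e := by
  by_cases hf : c (P.fst e) ∈ A <;> by_cases hs : c (P.snd e) ∈ A <;>
    simp [crossing, contract, ind, hP.fst_mem e he, hP.snd_mem e he, hf, hs]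

theorem degree_contract (hP : P.Consistent) (A : Finset V') :
    (P.contract c).degree A = P.degree {v ∈ P.verts | c v ∈ A} := by
  have hcut : (P.contract c).cutSize A = P.cutSize {v ∈ P.verts | c v ∈ A} :=
    sum_congr rfl fun e he => by rw [hP.crossing_contract A he]
  rw [degree, degree, hcut]
  exact congr_arg _ (sum_fiberwise_eq_sum_filter _ _ _ _)

theorem residual_contract (hP : P.Consistent) (σ : E → ℤˣ) (A : Finset V') :
    (P.contract c).residual σ A = P.residual σ {v ∈ P.verts | c v ∈ A} := by
  have hflow : (P.contract c).netFlow σ A = P.netFlow σ {v ∈ P.verts | c v ∈ A} :=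
    sum_congr rfl fun e he => by rw [hP.crossing_contract A he]
  rw [residual, residual, hflow]
  simp only [StubGraph.contract, ← sum_sub_distrib]
  rw [sum_fiberwise_eq_sum_filter]

protected theorem contract (hP : P.Consistent) (c : V → V') : (P.contract c).Consistent where
  fst_mem e he := mem_image_of_mem c (hP.fst_mem e he)
  snd_mem e he := mem_image_of_mem c (hP.snd_mem e he)
  abs_stubFlow_le u _ := (abs_sum_le_sum_abs _ _).trans
    (sum_le_sum fun v hv => hP.abs_stubFlow_le v (mem_filter.1 hv).1)
  two_dvd_stubs_sub u _ := by
    simp only [StubGraph.contract, ← sum_sub_distrib]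
    exact dvd_sum fun v hv => hP.two_dvd_stubs_sub v (mem_filter.1 hv).1
  two_dvd_degree_sub u _ := by
    rw [← demand_singleton, hP.degree_contract, demand_contract]
    exact hP.two_dvd_degree_sub_demand (filter_subset _ _)
  six_dvd_sum := by
    simp only [StubGraph.contract, ← sum_sub_distrib]
    rw [sum_fiberwise_of_maps_to fun v hv => mem_image_of_mem c hv]
    exact hP.six_dvd_sum

end Consistent

theorem Admissible.contract (hP : P.Admissible) (c : V → V') : (P.contract c).Admissible where
  toConsistent := hP.toConsistent.contract c
  tight_verts := by
    have hverts : {v ∈ P.verts | c v ∈ (P.contract c).verts} = P.verts :=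
      filter_true_of_mem fun v hv => mem_image_of_mem c hv
    rw [Tight, hP.degree_contract, demand_contract, hverts]
    exact hP.tight_verts
  le_degree A hA hne hproper := by
    rw [hP.degree_contract, demand_contract]
    refine hP.le_degree _ (filter_subset _ _) ?_ fun h => hproper (hA.antisymm fun u hu => ?_)
    · obtain ⟨u, hu⟩ := hne
      obtain ⟨v, hv, rfl⟩ := mem_image.1 (hA hu)
      exact ⟨v, mem_filter.2 ⟨hv, hu⟩⟩
    · obtain ⟨v, hv, rfl⟩ := mem_image.1 hu
      exact filter_eq_self.1 h v hv

end Contract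

section Restrict

variable {V E : Type*} [DecidableEq V] {P : StubGraph V E} {A B : Finset V} {σ : E → ℤˣ}

/-- The subgraph induced by `A`; the edges that are not inside `A` are directed by `σ` and become
stubs. -/
def restrict (P : StubGraph V E) (A : Finset V) (σ : E → ℤˣ) : StubGraph V E where
  verts := A
  edges := {e ∈ P.edges | P.fst e ∈ A ∧ P.snd e ∈ A}
  fst := P.fst
  snd := P.snd
  stubs v := P.stubs v + ∑ e ∈ P.edges with ¬(P.fst e ∈ A ∧ P.snd e ∈ A), |P.crossing {v} e|
  stubFlow v :=
    P.stubFlow v + ∑ e ∈ P.edges with ¬(P.fst e ∈ A ∧ P.snd e ∈ A), σ e * P.crossing {v} e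
  target := P.target

theorem degree_restrict (hB : B ⊆ A) : (P.restrict A σ).degree B = P.degree B := by
  have houter : ∑ v ∈ B, ∑ e ∈ P.edges with ¬(P.fst e ∈ A ∧ P.snd e ∈ A), |P.crossing {v} e| =
      ∑ e ∈ P.edges with ¬(P.fst e ∈ A ∧ P.snd e ∈ A), |P.crossing B e| := by
    rw [sum_comm]
    exact sum_congr rfl fun e he => sum_abs_crossing_singleton fun h =>
      (mem_filter.1 he).2 ⟨hB h.1, hB h.2⟩
  have hcut : P.cutSize B = (P.restrict A σ).cutSize B +
      ∑ e ∈ P.edges with ¬(P.fst e ∈ A ∧ P.snd e ∈ A), |P.crossing B e| :=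
    (sum_filter_add_sum_filter_not P.edges _ _).symm
  rw [degree, degree, hcut, ← houter]
  simp only [restrict, sum_add_distrib]
  ring

theorem residual_restrict (P : StubGraph V E) (A B : Finset V) (σ σ' : E → ℤˣ) :
    (P.restrict A σ).residual σ' B =
      P.residual (fun e => if P.fst e ∈ A ∧ P.snd e ∈ A then σ' e else σ e) B := by
  have hinner : (P.restrict A σ).netFlow σ' B = ∑ e ∈ P.edges with P.fst e ∈ A ∧ P.snd e ∈ A,
      σ' e * P.crossing B e := rfl
  have houter : ∑ v ∈ B, ∑ e ∈ P.edges with ¬(P.fst e ∈ A ∧ P.snd e ∈ A),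
      (σ e : ℤ) * P.crossing {v} e =
      ∑ e ∈ P.edges with ¬(P.fst e ∈ A ∧ P.snd e ∈ A), σ e * P.crossing B e := by
    rw [sum_comm]
    exact sum_congr rfl fun e _ => by rw [crossing_eq_sum P B, mul_sum]
  have hflow : P.netFlow (fun e => if P.fst e ∈ A ∧ P.snd e ∈ A then σ' e else σ e) B =
      (P.restrict A σ).netFlow σ' B + ∑ e ∈ P.edges with ¬(P.fst e ∈ A ∧ P.snd e ∈ A),
        σ e * P.crossing B e := by
    rw [netFlow, ← sum_filter_add_sum_filter_not P.edges fun e => P.fst e ∈ A ∧ P.snd e ∈ A,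
      hinner]
    exact congr_arg₂ _ (sum_congr rfl fun e he => by rw [if_pos (mem_filter.1 he).2])
      (sum_congr rfl fun e he => by rw [if_neg (mem_filter.1 he).2])
  rw [residual, residual, hflow, ← houter]
  simp only [restrict, sum_sub_distrib, sum_add_distrib]
  ring

theorem solvable_of_restrict (hout : ∀ v ∈ P.verts \ A, 6 ∣ P.residual σ {v})
    (hin : (P.restrict A σ).Solvable) : P.Solvable := by
  obtain ⟨σ', hσ'⟩ := hin
  refine ⟨fun e => if P.fst e ∈ A ∧ P.snd e ∈ A then σ' e else σ e, fun v hv => ?_⟩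
  by_cases hvA : v ∈ A
  · rw [← residual_restrict]
    exact hσ' v hvA
  · have hflow : P.netFlow (fun e => if P.fst e ∈ A ∧ P.snd e ∈ A then σ' e else σ e) {v} =
        P.netFlow σ {v} := by
      refine sum_congr rfl fun e _ => ?_
      dsimp only
      split_ifs with h
      · have hzero : P.crossing {v} e = 0 := crossing_eq_zero_of_iff (by
          simp [ne_of_mem_of_not_mem h.1 hvA, ne_of_mem_of_not_mem h.2 hvA])
        rw [hzero, mul_zero, mul_zero]
      · rfl
    rw [residual, hflow]
    exact hout v (mem_sdiff.2 ⟨hv, hvA⟩)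

theorem Consistent.restrict (hP : P.Consistent) (hA : A ⊆ P.verts) (h : 6 ∣ P.residual σ A) :
    (P.restrict A σ).Consistent where
  fst_mem e he := (mem_filter.1 he).2.1
  snd_mem e he := (mem_filter.1 he).2.2
  abs_stubFlow_le v hv := by
    refine (abs_add_le _ _).trans (add_le_add (hP.abs_stubFlow_le v (hA hv)) ?_)
    refine (abs_sum_le_sum_abs _ _).trans_eq (sum_congr rfl fun e _ => ?_)
    rcases Int.units_eq_one_or (σ e) with h | h <;> simp [h]
  two_dvd_stubs_sub v hv := by
    simp only [StubGraph.restrict, add_sub_add_comm, ← sum_sub_distrib]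
    refine (hP.two_dvd_stubs_sub v (hA hv)).add (dvd_sum fun e _ => ?_)
    rcases Int.units_eq_one_or (σ e) with h | h <;>
      rcases P.crossing_eq_zero_or {v} e with h' | h' | h' <;> simp [h, h']
  two_dvd_degree_sub v hv := by
    have hdegree : (P.restrict A σ).degree {v} = P.degree {v} :=
      degree_restrict (singleton_subset_iff.2 hv)
    rw [hdegree]
    exact hP.two_dvd_degree_sub v (hA hv)
  six_dvd_sum := by
    have hflow : (P.restrict A σ).netFlow σ A = 0 := sum_eq_zero fun e he => by
      have hmem := (mem_filter.1 he).2
      have hzero : P.crossing A e = 0 := crossing_eq_zero_of_iff (by simp [hmem])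
      exact mul_eq_zero_of_right _ hzero
    have hres := residual_restrict P A A σ σ
    simp only [ite_self] at hres
    rw [← hres, residual, hflow, sub_zero] at h
    exact h

end Restrict

section Orient

variable {V E : Type*} [DecidableEq V] [DecidableEq E] {P : StubGraph V E} {e : E}

/-- The graph obtained by directing the edge `e` according to `ε` and deleting it. -/
def orient (P : StubGraph V E) (e : E) (ε : ℤˣ) : StubGraph V E :=
  { P with
    edges := P.edges.erase e
    target := fun v => P.target v - ε * P.crossing {v} e }

theorem degree_orient (he : e ∈ P.edges) (ε : ℤˣ) (A : Finset V) :
    (P.orient e ε).degree A = P.degree A - |P.crossing A e| := by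
  have hcut : (P.orient e ε).cutSize A = P.cutSize A - |P.crossing A e| :=
    sum_erase_eq_sub he
  rw [degree, degree, hcut]
  exact sub_add_eq_add_sub _ _ _

theorem demand_orient (P : StubGraph V E) (e : E) (ε : ℤˣ) (A : Finset V) :
    (P.orient e ε).demand A = P.demand A - ε * P.crossing A e := by
  simp only [demand, orient, sum_sub_distrib, ← mul_sum, ← crossing_eq_sum]

theorem residual_orient (he : e ∈ P.edges) (ε : ℤˣ) (σ : E → ℤˣ) (A : Finset V) :
    (P.orient e ε).residual σ A = P.residual (Function.update σ e ε) A := by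
  have hflow : P.netFlow (Function.update σ e ε) A =
      (P.orient e ε).netFlow σ A + ε * P.crossing A e := by
    rw [netFlow, ← sum_erase_add _ _ he, Function.update_self]
    refine congr_arg (· + _) (sum_congr rfl fun e' he' => ?_)
    rw [Function.update_of_ne (ne_of_mem_erase he')]
    rfl
  rw [residual, residual, hflow, crossing_eq_sum P A]
  simp only [orient, sum_sub_distrib, mul_sum]
  ring

theorem Solvable.of_orient {ε : ℤˣ} (h : (P.orient e ε).Solvable) (he : e ∈ P.edges) :
    P.Solvable := by
  obtain ⟨σ, hσ⟩ := h
  exact ⟨Function.update σ e ε, fun v hv => residual_orient he ε σ {v} ▸ hσ v hv⟩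

theorem Consistent.orient (hP : P.Consistent) (he : e ∈ P.edges) (ε : ℤˣ) :
    (P.orient e ε).Consistent where
  fst_mem e' he' := hP.fst_mem e' (mem_of_mem_erase he')
  snd_mem e' he' := hP.snd_mem e' (mem_of_mem_erase he')
  abs_stubFlow_le := hP.abs_stubFlow_le
  two_dvd_stubs_sub := hP.two_dvd_stubs_sub
  two_dvd_degree_sub v hv := by
    have hpar := hP.two_dvd_degree_sub v hv
    rw [degree_orient he]
    change 2 ∣ P.degree {v} - |P.crossing {v} e| - (P.target v - ε * P.crossing {v} e)
    rcases Int.units_eq_one_or ε with rfl | rfl <;>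
      rcases P.crossing_eq_zero_or {v} e with h | h | h <;> simp [h] <;> omega
  six_dvd_sum := by
    have hsum : ∑ v ∈ P.verts, (ε : ℤ) * P.crossing {v} e = 0 := by
      rw [← mul_sum, ← crossing_eq_sum, hP.crossing_verts he, mul_zero]
    have hdvd := hP.six_dvd_sum
    simp only [StubGraph.orient, sum_sub_distrib, hsum, sub_zero] at hdvd ⊢
    exact hdvd

end Orient

section AddStubs

variable {V E : Type*} [DecidableEq V] {P : StubGraph V E}

/-- The graph obtained by attaching `w` stubs with net outflow `b` to `v` and raising the
prescribed net outflow of `v` accordingly. -/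
def addStubs (P : StubGraph V E) (v : V) (w b : ℤ) : StubGraph V E :=
  { P with
    stubs := fun u => P.stubs u + w * ind {v} u
    stubFlow := fun u => P.stubFlow u + b * ind {v} u
    target := fun u => P.target u + b * ind {v} u }

theorem degree_addStubs (P : StubGraph V E) (v : V) (w b : ℤ) (A : Finset V) :
    (P.addStubs v w b).degree A = P.degree A + w * ind A v := by
  have hcut : (P.addStubs v w b).cutSize A = P.cutSize A := rfl
  rw [degree, hcut]
  simp only [degree, addStubs, sum_add_distrib, ← mul_sum, sum_ind_singleton, add_assoc]

theorem demand_addStubs (P : StubGraph V E) (v : V) (w b : ℤ) (A : Finset V) :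
    (P.addStubs v w b).demand A = P.demand A + b * ind A v := by
  simp only [demand, addStubs, sum_add_distrib, ← mul_sum, sum_ind_singleton]

theorem residual_addStubs (P : StubGraph V E) (v : V) (w b : ℤ) (σ : E → ℤˣ) (A : Finset V) :
    (P.addStubs v w b).residual σ A = P.residual σ A := by
  have hflow : (P.addStubs v w b).netFlow σ A = P.netFlow σ A := rfl
  rw [residual, hflow]
  simp only [residual, addStubs, add_sub_add_right_eq_sub]

theorem Solvable.of_addStubs {v : V} {w b : ℤ} (h : (P.addStubs v w b).Solvable) : P.Solvable := by
  obtain ⟨σ, hσ⟩ := h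
  exact ⟨σ, fun u hu => residual_addStubs P v w b σ {u} ▸ hσ u hu⟩

theorem Consistent.addStubs (hP : P.Consistent) {v : V} {w b : ℤ} (hwb : 2 ∣ w - b)
    (h : |P.stubFlow v + b| ≤ P.stubs v + w) : (P.addStubs v w b).Consistent where
  fst_mem := hP.fst_mem
  snd_mem := hP.snd_mem
  abs_stubFlow_le u hu := by
    have hu' := hP.abs_stubFlow_le u hu
    by_cases huv : u = v
    · subst huv; simpa [StubGraph.addStubs, ind] using h
    · simpa [StubGraph.addStubs, ind, huv] using hu'
  two_dvd_stubs_sub u hu := by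
    have hu' := hP.two_dvd_stubs_sub u hu
    simp only [StubGraph.addStubs]
    rcases ind_eq_zero_or_one {v} u with h | h <;> rw [h] <;> omega
  two_dvd_degree_sub u hu := by
    have hu' := hP.two_dvd_degree_sub u hu
    rw [← demand_singleton] at hu'
    rw [← demand_singleton, degree_addStubs, demand_addStubs]
    rcases ind_eq_zero_or_one {u} v with h | h <;> rw [h] <;> omega
  six_dvd_sum := by
    simpa only [StubGraph.addStubs, add_sub_add_right_eq_sub] using hP.six_dvd_sum

end AddStubs

/-! ### Splitting off -/

section Splitting

variable {V E : Type*} [DecidableEq V] {P Q R : StubGraph V E} {v : V} {k l : ℕ}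

/-- The graph `Q` arises from `P` by splitting off `k` pairs of edges or stubs at `v`. -/
structure IsSplitting (P : StubGraph V E) (v : V) (k : ℕ) (Q : StubGraph V E) : Prop where
  verts_eq : Q.verts = P.verts
  demand_eq : ∀ A, Q.demand A = P.demand A
  consistent : Q.Consistent
  solvable : Q.Solvable → P.Solvable
  degree_self : Q.degree {v} = P.degree {v} - 2 * k
  degree_verts : Q.degree P.verts = P.degree P.verts
  degree_add_le : ∀ A, v ∉ A →
    P.degree A + P.degree (insert v A) ≤ Q.degree A + Q.degree (insert v A) + 2 * k

namespace IsSplitting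

theorem refl (hP : P.Consistent) (v : V) : P.IsSplitting v 0 P :=
  ⟨rfl, fun _ => rfl, hP, id, by simp, rfl, by simp⟩

theorem trans (h₁ : P.IsSplitting v k Q) (h₂ : Q.IsSplitting v l R) :
    P.IsSplitting v (k + l) R where
  verts_eq := h₂.verts_eq.trans h₁.verts_eq
  demand_eq A := (h₂.demand_eq A).trans (h₁.demand_eq A)
  consistent := h₂.consistent
  solvable := h₁.solvable ∘ h₂.solvable
  degree_self := by rw [h₂.degree_self, h₁.degree_self]; push_cast; ring
  degree_verts := by rw [← h₁.degree_verts, ← h₁.verts_eq, h₂.degree_verts]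
  degree_add_le A hA := by
    have hPQ := h₁.degree_add_le A hA
    have hQR := h₂.degree_add_le A hA
    push_cast
    linarith

end IsSplitting

section Lift

variable [DecidableEq E] {e₁ e₂ : E} {y₁ y₂ : V} {δ₁ δ₂ : ℤˣ}

/-- The graph obtained by replacing the edges `e₁` and `e₂` by a single edge from `y₁` to `y₂`,
which is again called `e₁`. -/
def lift (P : StubGraph V E) (e₁ e₂ : E) (y₁ y₂ : V) : StubGraph V E :=
  { P with
    edges := P.edges.erase e₂
    fst := Function.update P.fst e₁ y₁
    snd := Function.update P.snd e₁ y₂ }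

theorem crossing_lift_self (A : Finset V) :
    (P.lift e₁ e₂ y₁ y₂).crossing A e₁ = ind A y₁ - ind A y₂ := by
  simp [crossing, lift]

theorem crossing_lift_of_ne {e : E} (he : e ≠ e₁) (A : Finset V) :
    (P.lift e₁ e₂ y₁ y₂).crossing A e = P.crossing A e := by
  simp [crossing, lift, he]

theorem degree_lift (he₁ : e₁ ∈ P.edges) (he₂ : e₂ ∈ P.edges) (hne : e₁ ≠ e₂) (A : Finset V) :
    (P.lift e₁ e₂ y₁ y₂).degree A =
      P.degree A - |P.crossing A e₁| - |P.crossing A e₂| + |ind A y₁ - ind A y₂| := by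
  have he₁' : e₁ ∈ P.edges.erase e₂ := mem_erase.2 ⟨hne, he₁⟩
  have hrest : ∑ e ∈ (P.edges.erase e₂).erase e₁, |(P.lift e₁ e₂ y₁ y₂).crossing A e| =
      ∑ e ∈ (P.edges.erase e₂).erase e₁, |P.crossing A e| :=
    sum_congr rfl fun e he => by rw [crossing_lift_of_ne (ne_of_mem_erase he)]
  have hQ : (P.lift e₁ e₂ y₁ y₂).cutSize A =
      ∑ e ∈ (P.edges.erase e₂).erase e₁, |P.crossing A e| + |ind A y₁ - ind A y₂| := by
    rw [← hrest, ← crossing_lift_self (P := P) (e₁ := e₁) (e₂ := e₂), sum_erase_add _ _ he₁']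
    rfl
  have hP : P.cutSize A = ∑ e ∈ (P.edges.erase e₂).erase e₁, |P.crossing A e| +
      |P.crossing A e₁| + |P.crossing A e₂| := by
    rw [sum_erase_add _ _ he₁', sum_erase_add _ _ he₂, cutSize]
  have hstubs : (P.lift e₁ e₂ y₁ y₂).stubs = P.stubs := rfl
  rw [degree, degree, hQ, hP, hstubs]
  ring

theorem netFlow_lift (he₁ : e₁ ∈ P.edges) (he₂ : e₂ ∈ P.edges) (hne : e₁ ≠ e₂)
    (h₁ : P.Joins e₁ v y₁ δ₁) (h₂ : P.Joins e₂ v y₂ δ₂) (σ : E → ℤˣ) (A : Finset V) :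
    (P.lift e₁ e₂ y₁ y₂).netFlow σ A =
      P.netFlow (Function.update (Function.update σ e₂ (σ e₁ * δ₂)) e₁ (-(σ e₁ * δ₁))) A := by
  have he₁' : e₁ ∈ P.edges.erase e₂ := mem_erase.2 ⟨hne, he₁⟩
  have hrest : ∀ e ∈ (P.edges.erase e₂).erase e₁,
      (Function.update (Function.update σ e₂ (σ e₁ * δ₂)) e₁ (-(σ e₁ * δ₁)) e : ℤ) *
        P.crossing A e = σ e * (P.lift e₁ e₂ y₁ y₂).crossing A e := fun e he => by
    obtain ⟨hne₁, he⟩ := mem_erase.1 he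
    rw [Function.update_of_ne hne₁, Function.update_of_ne (ne_of_mem_erase he),
      crossing_lift_of_ne hne₁]
  rw [netFlow, netFlow, ← sum_erase_add P.edges _ he₂, ← sum_erase_add (P.edges.erase e₂) _ he₁',
    sum_congr rfl hrest, Function.update_self, Function.update_of_ne hne.symm,
    Function.update_self, h₁ A, h₂ A]
  change ∑ e ∈ P.edges.erase e₂, _ = _
  rw [← sum_erase_add _ _ he₁', crossing_lift_self]
  rcases Int.units_eq_one_or δ₁ with rfl | rfl <;> rcases Int.units_eq_one_or δ₂ with rfl | rfl <;>
    push_cast <;> ring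

theorem Consistent.lift (hP : P.Consistent) (he₁ : e₁ ∈ P.edges) (he₂ : e₂ ∈ P.edges)
    (hne : e₁ ≠ e₂) (h₁ : P.Joins e₁ v y₁ δ₁) (h₂ : P.Joins e₂ v y₂ δ₂) (hy₁ : y₁ ∈ P.verts)
    (hy₂ : y₂ ∈ P.verts) : (P.lift e₁ e₂ y₁ y₂).Consistent where
  fst_mem e he := by
    rcases eq_or_ne e e₁ with rfl | hne₁
    · simpa [StubGraph.lift] using hy₁
    · simpa [StubGraph.lift, hne₁] using hP.fst_mem e (mem_of_mem_erase he)
  snd_mem e he := by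
    rcases eq_or_ne e e₁ with rfl | hne₁
    · simpa [StubGraph.lift] using hy₂
    · simpa [StubGraph.lift, hne₁] using hP.snd_mem e (mem_of_mem_erase he)
  abs_stubFlow_le := hP.abs_stubFlow_le
  two_dvd_stubs_sub := hP.two_dvd_stubs_sub
  two_dvd_degree_sub u hu := by
    have hu' := hP.two_dvd_degree_sub u hu
    rw [degree_lift he₁ he₂ hne, h₁.abs_crossing, h₂.abs_crossing]
    change 2 ∣ _ - P.target u
    rcases ind_eq_zero_or_one {u} v with h | h <;> rcases ind_eq_zero_or_one {u} y₁ with h' | h' <;>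
      rcases ind_eq_zero_or_one {u} y₂ with h'' | h'' <;> simp [h, h', h''] <;> omega
  six_dvd_sum := hP.six_dvd_sum

theorem isSplitting_lift (hP : P.Consistent) (he₁ : e₁ ∈ P.edges) (he₂ : e₂ ∈ P.edges)
    (hne : e₁ ≠ e₂) (h₁ : P.Joins e₁ v y₁ δ₁) (h₂ : P.Joins e₂ v y₂ δ₂) (hv : v ∈ P.verts)
    (hy₁ : y₁ ∈ P.verts) (hy₂ : y₂ ∈ P.verts) (hy₁v : y₁ ≠ v) (hy₂v : y₂ ≠ v) :
    P.IsSplitting v 1 (P.lift e₁ e₂ y₁ y₂) := by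
  have hdegree (A : Finset V) : (P.lift e₁ e₂ y₁ y₂).degree A =
      P.degree A - |ind A v - ind A y₁| - |ind A v - ind A y₂| + |ind A y₁ - ind A y₂| := by
    rw [degree_lift he₁ he₂ hne, h₁.abs_crossing, h₂.abs_crossing]
  refine ⟨rfl, fun _ => rfl, hP.lift he₁ he₂ hne h₁ h₂ hy₁ hy₂, ?_, ?_, ?_, fun A hA => ?_⟩
  · rintro ⟨σ, hσ⟩
    refine ⟨Function.update (Function.update σ e₂ (σ e₁ * δ₂)) e₁ (-(σ e₁ * δ₁)), fun u hu => ?_⟩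
    have hu' := hσ u hu
    rwa [residual, netFlow_lift he₁ he₂ hne h₁ h₂] at hu'
  · rw [hdegree]
    simp [ind, hy₁v, hy₂v]
    ring
  · rw [hdegree]
    simp [ind, hv, hy₁, hy₂]
  · rw [hdegree, hdegree, ind_insert hA, ind_insert hA, ind_insert hA]
    by_cases h : y₁ ∈ A <;> by_cases h' : y₂ ∈ A <;>
      simp [ind, h, h', hA, hy₁v, hy₂v] <;> linarith

end Lift

theorem Consistent.exists_abs_stubFlow_sub_le (hP : P.Consistent) (hv : v ∈ P.verts)
    (hstub : 1 ≤ P.stubs v) : ∃ s : ℤˣ, |P.stubFlow v - s| ≤ P.stubs v - 1 := by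
  have habs := abs_le.1 (hP.abs_stubFlow_le v hv)
  have hpar := hP.two_dvd_stubs_sub v hv
  rcases le_or_gt 0 (P.stubFlow v) with hpos | hneg
  · exact ⟨1, abs_le.2 (by push_cast; omega)⟩
  · exact ⟨-1, abs_le.2 (by push_cast; omega)⟩

/-- A stub at `v` can be moved to the other end of an edge at `v`, which is then deleted; the
edge is directed so that it takes over the flow of the stub. -/
theorem exists_isSplitting_stub {e : E} {y : V} {δ : ℤˣ} (hP : P.Consistent) (he : e ∈ P.edges)
    (h : P.Joins e v y δ) (hv : v ∈ P.verts) (hy : y ∈ P.verts) (hyv : y ≠ v)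
    (hstub : 1 ≤ P.stubs v) :
    ∃ Q, P.IsSplitting v 1 Q ∧ Q.stubs v = P.stubs v - 1 := by
  classical
  obtain ⟨s, hs⟩ := hP.exists_abs_stubFlow_sub_le hv hstub
  have hydj : y ∉ ({v} : Finset V) := by simpa using hyv
  have hs_abs : |(s : ℤ)| = 1 := by rcases Int.units_eq_one_or s with rfl | rfl <;> rfl
  have hs_par : 2 ∣ (1 : ℤ) - s := by rcases Int.units_eq_one_or s with rfl | rfl <;> decide
  have hy_abs := hP.abs_stubFlow_le y hy
  let Q := ((P.orient e (-s * δ)).addStubs v (-1) (-s)).addStubs y 1 s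
  have hdegree (A : Finset V) :
      Q.degree A = P.degree A - |ind A v - ind A y| - ind A v + ind A y := by
    simp only [Q, degree_addStubs, degree_orient he, h.abs_crossing]
    ring
  have hdemand (A : Finset V) : Q.demand A = P.demand A := by
    simp only [Q, demand_addStubs, demand_orient, h A]
    rcases Int.units_eq_one_or δ with rfl | rfl <;> push_cast <;> ring
  refine ⟨Q, ⟨rfl, hdemand, ?_, ?_, ?_, ?_, fun A hA => ?_⟩, ?_⟩
  · refine ((hP.orient he _).addStubs (by omega) ?_).addStubs hs_par ?_
    · simpa [orient, ← sub_eq_add_neg] using hs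
    · simp only [addStubs, orient, ind_of_notMem hydj, mul_zero, add_zero]
      exact (abs_add_le _ _).trans (by omega)
  · exact fun hQ => (hQ.of_addStubs.of_addStubs).of_orient he
  · rw [hdegree]
    simp [ind, hyv]
    ring
  · rw [hdegree]
    simp [ind, hv, hy]
  · rw [hdegree, hdegree, ind_insert hA, ind_insert hA]
    by_cases h : y ∈ A
    · simp [ind, h, hA, hyv]
    · simp [ind, h, hA, hyv]
      linarith
  · simp [Q, addStubs, orient, ind, hyv.symm]
    ring

theorem exists_isSplitting_one (hP : P.Consistent) (hv : v ∈ P.verts)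
    (hdeg : 2 ≤ P.degree {v}) (hstubs : 2 * P.stubs v ≤ P.degree {v}) :
    ∃ Q, P.IsSplitting v 1 Q ∧ 2 * Q.stubs v ≤ Q.degree {v} := by
  classical
  have hjoins {e : E} (he : e ∈ P.edges) (h : P.crossing {v} e ≠ 0) :
      ∃ y δ, y ∈ P.verts ∧ y ≠ v ∧ P.Joins e v y δ := by
    obtain ⟨v', hv', y, hy, δ, hδ⟩ := hP.exists_joins he h
    rw [mem_singleton] at hv'
    rw [mem_sdiff, mem_singleton] at hy
    exact ⟨y, δ, hy.1, hy.2, hv' ▸ hδ⟩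
  have hdegree := P.degree_singleton v
  rcases (hP.stubs_nonneg hv).eq_or_lt with hzero | hpos
  · have htwo : 1 < #{e ∈ P.edges | P.crossing {v} e ≠ 0} := by
      have := P.card_filter_crossing_ne_zero {v}
      omega
    obtain ⟨e₁, he₁, e₂, he₂, hne⟩ := one_lt_card.1 htwo
    rw [mem_filter] at he₁ he₂
    obtain ⟨y₁, δ₁, hy₁, hy₁v, h₁⟩ := hjoins he₁.1 he₁.2
    obtain ⟨y₂, δ₂, hy₂, hy₂v, h₂⟩ := hjoins he₂.1 he₂.2
    have hQ := isSplitting_lift hP he₁.1 he₂.1 hne h₁ h₂ hv hy₁ hy₂ hy₁v hy₂v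
    refine ⟨_, hQ, ?_⟩
    have hQv := hQ.degree_self
    change 2 * P.stubs v ≤ _
    push_cast at hQv
    omega
  · obtain ⟨e, he, hev⟩ := exists_crossing_ne_zero (P := P) (A := {v}) (by omega)
    obtain ⟨y, δ, hy, hyv, h⟩ := hjoins he hev
    obtain ⟨Q, hQ, hQstubs⟩ := exists_isSplitting_stub hP he h hv hy hyv hpos
    have hQv := hQ.degree_self
    push_cast at hQv
    exact ⟨Q, hQ, by omega⟩

theorem exists_isSplitting (hP : P.Consistent) (hv : v ∈ P.verts) (hdeg : P.degree {v} = 2 * k)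
    (hstubs : 2 * P.stubs v ≤ P.degree {v}) : ∃ Q, P.IsSplitting v k Q := by
  induction k generalizing P with
  | zero => exact ⟨P, IsSplitting.refl hP v⟩
  | succ k ih =>
    obtain ⟨Q, hPQ, hQstubs⟩ := exists_isSplitting_one hP hv (by push_cast at hdeg; omega) hstubs
    have hQv := hPQ.degree_self
    push_cast at hdeg hQv
    obtain ⟨R, hQR⟩ := ih hPQ.consistent (hPQ.verts_eq ▸ hv) (by omega) hQstubs
    exact ⟨R, add_comm 1 k ▸ hPQ.trans hQR⟩

end Splitting

/-! ### The extension theorem -/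

variable {V E : Type*} [DecidableEq V] {P Q : StubGraph V E} {A : Finset V} {e : E}
  {u v y : V} {δ : ℤˣ}

section Connectivity

theorem Consistent.degree_sdiff (hP : P.Consistent) (hA : A ⊆ P.verts) :
    P.degree (P.verts \ A) + P.degree A = 2 * P.cutSize A + P.degree P.verts := by
  rw [degree, degree, hP.cutSize_sdiff, hP.degree_verts, ← sum_sdiff hA]
  ring

theorem demand_sdiff {V E : Type*} [DecidableEq V] {P : StubGraph V E} {A : Finset V}
    (hA : A ⊆ P.verts) : P.demand (P.verts \ A) + P.demand A = P.demand P.verts :=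
  sum_sdiff hA

/-- The stubs alone cannot supply the degrees of `A` and of its complement, since the whole vertex
set is tight. -/
theorem Admissible.two_le_cutSize (hP : P.Admissible) (hA : A ⊆ P.verts) (hne : A.Nonempty)
    (hproper : A ≠ P.verts) : 2 ≤ P.cutSize A := by
  have hverts : P.degree P.verts ≤ 4 + sixNorm (P.demand P.verts) := hP.tight_verts
  have hnorm := sixNorm_add_le (P.demand (P.verts \ A)) (P.demand A)
  rw [demand_sdiff hA] at hnorm
  have hin := hP.le_degree A hA hne hproper
  have hout := hP.le_degree (P.verts \ A) sdiff_subset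
    (sdiff_nonempty.2 fun h => hproper (hA.antisymm h))
    fun h => hne.ne_empty (disjoint_self.1 ((sdiff_eq_left.1 h).mono_left hA))
  have hsum := hP.degree_sdiff hA
  omega

end Connectivity

section SmallGraphs

theorem exists_netFlow_eq (P : StubGraph V E) (A : Finset V) {k : ℕ} (hk : k ≤ P.cutSize A) :
    ∃ σ, P.netFlow σ A = 2 * k - P.cutSize A := by
  classical
  rw [← card_filter_crossing_ne_zero, Nat.cast_le] at hk
  obtain ⟨K, hK, rfl⟩ := exists_subset_card_eq hk
  refine ⟨fun e => if (e ∈ K ↔ P.crossing A e = 1) then 1 else -1, ?_⟩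
  have hcard : ((#K : ℕ) : ℤ) = ∑ e ∈ P.edges, if e ∈ K then 1 else 0 := by
    rw [sum_boole, filter_mem_eq_inter, inter_eq_right.2 (hK.trans (filter_subset _ _))]
  rw [hcard, cutSize, mul_sum, ← sum_sub_distrib]
  refine sum_congr rfl fun e _ => ?_
  have hzero (h : P.crossing A e = 0) : e ∉ K := fun he => (mem_filter.1 (hK he)).2 h
  rcases P.crossing_eq_zero_or A e with h | h | h
  · simp [h, hzero h]
  all_goals by_cases he : e ∈ K <;> simp [h, he]

theorem Consistent.exists_six_dvd_residual (hP : P.Consistent) (hv : v ∈ P.verts)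
    (hcut : 2 ≤ P.cutSize {v}) : ∃ σ, 6 ∣ P.residual σ {v} := by
  have hpar := hP.two_dvd_degree_sub v hv
  have hstubs := hP.two_dvd_stubs_sub v hv
  rw [degree_singleton] at hpar
  let k := (P.target v - P.stubFlow v + P.cutSize {v}) / 2 % 3
  obtain ⟨σ, hσ⟩ := P.exists_netFlow_eq {v} (k := k.toNat) (by omega)
  refine ⟨σ, ?_⟩
  rw [residual, sum_singleton, hσ]
  omega

theorem Admissible.solvable_of_card_verts_le_two (hP : P.Admissible) (hcard : #P.verts ≤ 2) :
    P.Solvable := by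
  by_cases hone : #P.verts ≤ 1
  · refine ⟨1, fun v hv => ?_⟩
    have hverts : P.verts = {v} :=
      eq_singleton_iff_unique_mem.2 ⟨hv, fun w hw => card_le_one.1 hone w hw v hv⟩
    exact hverts ▸ hP.six_dvd_residual_verts 1
  · obtain ⟨u, v, huv, hverts⟩ := card_eq_two.1 (by omega : #P.verts = 2)
    have hu : u ∈ P.verts := by simp [hverts]
    obtain ⟨σ, hσ⟩ := hP.exists_six_dvd_residual hu
      (hP.two_le_cutSize (singleton_subset_iff.2 hu) (singleton_nonempty u)
        fun h => hone (by simp [← h]))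
    have hsum := hP.six_dvd_residual_verts σ
    rw [residual_eq_sum, hverts, sum_pair huv] at hsum
    refine ⟨σ, fun w hw => ?_⟩
    rcases mem_insert.1 (hverts ▸ hw) with rfl | hw
    · exact hσ
    · exact mem_singleton.1 hw ▸ (dvd_add_right hσ).1 hsum

end SmallGraphs

section Induction

/-- The measure on which the induction runs: first the number of vertices, then the number of
edges, where an edge may be exchanged for one stub. -/
def size {V E : Type*} (P : StubGraph V E) : ℕ ×ₗ ℕ :=
  toLex (#P.verts, 2 * #P.edges + (∑ v ∈ P.verts, P.stubs v).toNat)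

/-- The induction hypothesis for `P`. -/
def SolvableBelow (P : StubGraph V E) : Prop :=
  ∀ Q : StubGraph V E, Q.size < P.size → Q.Admissible → Q.Solvable

/-- No proper subset with at least two vertices is tight; by parity the degree then exceeds the
bound of an admissible graph by at least two. -/
def Strict (P : StubGraph V E) : Prop :=
  ∀ A ⊆ P.verts, A ≠ P.verts → 1 < #A → 6 + sixNorm (P.demand A) ≤ P.degree A

theorem size_lt_of_card_verts_lt {V E : Type*} {P Q : StubGraph V E} (h : #Q.verts < #P.verts) :
    Q.size < P.size :=
  Prod.Lex.toLex_lt_toLex.2 (Or.inl h)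

theorem size_lt_of_verts_eq {V E : Type*} {P Q : StubGraph V E} (hverts : Q.verts = P.verts)
    (h : 2 * #Q.edges + (∑ v ∈ P.verts, Q.stubs v).toNat <
      2 * #P.edges + (∑ v ∈ P.verts, P.stubs v).toNat) : Q.size < P.size :=
  Prod.Lex.toLex_lt_toLex.2 (Or.inr ⟨congr_arg card hverts, hverts ▸ h⟩)

theorem Admissible.restrict {σ : E → ℤˣ} (hP : P.Admissible) (hA : A ⊆ P.verts) (ht : P.Tight A)
    (h : 6 ∣ P.residual σ A) : (P.restrict A σ).Admissible where
  toConsistent := hP.toConsistent.restrict hA h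
  tight_verts := (degree_restrict Subset.rfl).trans_le ht
  le_degree B hB hne hproper := by
    have hdegree : (P.restrict A σ).degree B = P.degree B := degree_restrict hB
    rw [hdegree]
    exact hP.le_degree B (hB.trans hA) hne fun h => hproper (hB.antisymm (h ▸ hA))

/-- The map that identifies the set `A` to the vertex `a` and fixes all other vertices. -/
def collapse (A : Finset V) (a u : V) : V := if u ∈ A then a else u

theorem collapse_of_mem (hu : u ∈ A) (a : V) : collapse A a u = a := if_pos hu

theorem collapse_of_notMem (hu : u ∉ A) (a : V) : collapse A a u = u := if_neg hu

theorem filter_collapse_mem_singleton_self {B : Finset V} {a : V} (ha : a ∈ A) (hA : A ⊆ B) :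
    {u ∈ B | collapse A a u ∈ ({a} : Finset V)} = A := by
  ext u
  by_cases hu : u ∈ A
  · simp [collapse, hu, hA hu]
  · simp [collapse, hu, (ne_of_mem_of_not_mem ha hu).symm]

theorem filter_collapse_mem_singleton {B : Finset V} {a : V} (ha : a ∈ A) (hv : v ∈ B \ A) :
    {u ∈ B | collapse A a u ∈ ({v} : Finset V)} = {v} := by
  obtain ⟨hv, hvA⟩ := mem_sdiff.1 hv
  ext u
  by_cases hu : u ∈ A
  · simp [collapse, hu, ne_of_mem_of_not_mem ha hvA, ne_of_mem_of_not_mem hu hvA]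
  · simp only [mem_filter, mem_singleton, collapse_of_notMem hu, and_iff_right_iff_imp]
    rintro rfl
    exact hv

theorem image_collapse_subset_erase {B : Finset V} {a b : V} (ha : a ∈ A) (hb : b ∈ A)
    (hab : a ≠ b) (hA : A ⊆ B) : B.image (collapse A a) ⊆ B.erase b := by
  refine image_subset_iff.2 fun u hu => ?_
  by_cases huA : u ∈ A
  · simpa [collapse, huA, hab] using hA ha
  · simpa [collapse, huA, hu] using (ne_of_mem_of_not_mem hb huA).symm

/-- A tight set is contracted to a single vertex; after the contracted graph has been solved, the
set itself is solved with the edges leaving it turned into stubs. -/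
theorem Admissible.solvable_of_tight (hP : P.Admissible) (ih : P.SolvableBelow) (hA : A ⊆ P.verts)
    (hproper : A ≠ P.verts) (hcard : 1 < #A) (ht : P.Tight A) : P.Solvable := by
  obtain ⟨a, ha, b, hb, hab⟩ := one_lt_card.1 hcard
  have himage := card_le_card (image_collapse_subset_erase ha hb hab hA)
  obtain ⟨σ, hσ⟩ := ih (P.contract (collapse A a))
    (size_lt_of_card_verts_lt (himage.trans_lt (card_erase_lt_of_mem (hA hb))))
    (hP.contract (collapse A a))
  have hfiber {v : V} (hv : v ∈ P.verts) :
      6 ∣ P.residual σ {u ∈ P.verts | collapse A a u ∈ ({collapse A a v} : Finset V)} :=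
    hP.residual_contract σ {collapse A a v} ▸ hσ _ (mem_image_of_mem _ hv)
  have hin : 6 ∣ P.residual σ A := by
    simpa only [collapse_of_mem ha, filter_collapse_mem_singleton_self ha hA]
      using hfiber (hA ha)
  have hout (v) (hv : v ∈ P.verts \ A) : 6 ∣ P.residual σ {v} := by
    simpa only [collapse_of_notMem (mem_sdiff.1 hv).2, filter_collapse_mem_singleton ha hv]
      using hfiber (mem_sdiff.1 hv).1
  exact solvable_of_restrict hout (ih _ (size_lt_of_card_verts_lt
    (card_lt_card (hA.ssubset_of_ne hproper))) (hP.restrict hA ht hin))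

end Induction

section ZeroVertex

theorem sixNorm_demand_insert {V E : Type*} [DecidableEq V] {P : StubGraph V E} {A : Finset V}
    {v : V} (hvA : v ∉ A) (ht : 6 ∣ P.target v) :
    sixNorm (P.demand (insert v A)) = sixNorm (P.demand A) :=
  sixNorm_eq_of_dvd_sub (by rwa [demand_insert hvA, add_sub_cancel_right])

theorem Consistent.cutSize_eq_zero_of_degree_eq_zero (hP : P.Consistent) (hv : v ∈ P.verts)
    (h : P.degree {v} = 0) : P.cutSize {v} = 0 ∧ P.stubs v = 0 := by
  have hcut := P.cutSize_nonneg {v}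
  have hstubs := hP.stubs_nonneg hv
  rw [degree_singleton] at h
  omega

theorem Consistent.degree_insert_of_degree_eq_zero (hP : P.Consistent) (hv : v ∈ P.verts)
    (h : P.degree {v} = 0) (hvA : v ∉ A) : P.degree (insert v A) = P.degree A := by
  obtain ⟨hcut, hstubs⟩ := hP.cutSize_eq_zero_of_degree_eq_zero hv h
  have hzero := (sum_eq_zero_iff_of_nonneg fun e _ => abs_nonneg (P.crossing {v} e)).1 hcut
  rw [degree, degree, sum_insert hvA, hstubs, zero_add]
  refine congr_arg (· + _) (sum_congr rfl fun e he => ?_)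
  rw [crossing_insert hvA, abs_eq_zero.1 (hzero e he), add_zero]

theorem Consistent.residual_of_degree_eq_zero (hP : P.Consistent) (hv : v ∈ P.verts)
    (h : P.degree {v} = 0) (σ : E → ℤˣ) : P.residual σ {v} = P.target v := by
  obtain ⟨hcut, hstubs⟩ := hP.cutSize_eq_zero_of_degree_eq_zero hv h
  have hzero := (sum_eq_zero_iff_of_nonneg fun e _ => abs_nonneg (P.crossing {v} e)).1 hcut
  have hflow : P.netFlow σ {v} = 0 :=
    sum_eq_zero fun e he => by rw [abs_eq_zero.1 (hzero e he), mul_zero]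
  have hstubFlow := abs_nonpos_iff.1 (hstubs ▸ hP.abs_stubFlow_le v hv)
  rw [residual, sum_singleton, hflow, hstubFlow, sub_zero, sub_zero]

theorem Consistent.six_dvd_residual_erase (hP : P.Consistent) (hv : v ∈ P.verts) {σ : E → ℤˣ}
    (h : 6 ∣ P.residual σ {v}) : 6 ∣ P.residual σ (P.verts.erase v) := by
  have hsum := hP.six_dvd_residual_verts σ
  rw [residual_eq_sum, ← sum_erase_add _ _ hv, ← residual_eq_sum] at hsum
  exact (dvd_add_left h).1 hsum

theorem Strict.two_mul_stubs_le (hs : P.Strict) (hP : P.Admissible) (hcard : 2 < #P.verts)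
    (hv : v ∈ P.verts) (ht : 6 ∣ P.target v) : 2 * P.stubs v + 2 ≤ P.degree {v} := by
  have hvsub := singleton_subset_iff.2 hv
  have herase := hs (P.verts \ {v}) sdiff_subset
    (by rw [sdiff_singleton_eq_erase]; exact (erase_ssubset hv).ne)
    (by rw [sdiff_singleton_eq_erase, card_erase_of_mem hv]; omega)
  have hsum := hP.degree_sdiff hvsub
  have hdemand := demand_sdiff hvsub
  rw [demand_singleton] at hdemand
  have hnorm : sixNorm (P.demand P.verts) = sixNorm (P.demand (P.verts \ {v})) :=
    sixNorm_eq_of_dvd_sub (by omega)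
  have hverts : P.degree P.verts ≤ 4 + sixNorm (P.demand P.verts) := hP.tight_verts
  have hdegree := P.degree_singleton v
  omega

theorem Strict.le_degree_of_isSplitting (hs : P.Strict) (hP : P.Admissible) (hv : v ∈ P.verts)
    (ht : 6 ∣ P.target v) (hPQ : P.IsSplitting v 2 Q) (hQ : Q.degree {v} = 0)
    (hA : A ⊆ P.verts.erase v) (hne : A.Nonempty) (hproper : A ≠ P.verts.erase v) :
    4 + sixNorm (P.demand A) ≤ Q.degree A := by
  have hvA : v ∉ A := fun h => notMem_erase v _ (hA h)
  have hAP : A ⊆ P.verts := hA.trans (erase_subset _ _)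
  have hbase := hP.le_degree A hAP hne fun h => hvA (h ▸ hv)
  have hstrict := hs (insert v A) (insert_subset hv hAP)
    (fun h => hproper (by rw [← h, erase_insert hvA]))
    (by rw [card_insert_of_notMem hvA]; have := hne.card_pos; omega)
  have hsum := hPQ.degree_add_le A hvA
  have hpar := hPQ.consistent.two_dvd_degree_sub_demand (hPQ.verts_eq ▸ hAP)
  have hnorm_par := two_dvd_sixNorm_sub (P.demand A)
  rw [sixNorm_demand_insert hvA ht] at hstrict
  rw [hPQ.consistent.degree_insert_of_degree_eq_zero (hPQ.verts_eq ▸ hv) hQ hvA] at hsum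
  rw [hPQ.demand_eq] at hpar
  push_cast at hsum
  omega

theorem Strict.admissible_restrict_erase (hs : P.Strict) (hP : P.Admissible)
    (hv : v ∈ P.verts) (ht : 6 ∣ P.target v) (hPQ : P.IsSplitting v 2 Q)
    (hQ : Q.degree {v} = 0) : (Q.restrict (P.verts.erase v) 1).Admissible := by
  have hvQ : v ∈ Q.verts := hPQ.verts_eq ▸ hv
  have hres : 6 ∣ Q.residual 1 {v} := by
    rwa [hPQ.consistent.residual_of_degree_eq_zero hvQ hQ, ← demand_singleton, hPQ.demand_eq,
      demand_singleton]
  have hcons : (Q.restrict (P.verts.erase v) 1).Consistent := by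
    rw [← hPQ.verts_eq]
    exact hPQ.consistent.restrict (erase_subset _ _)
      (hPQ.consistent.six_dvd_residual_erase hvQ hres)
  refine ⟨hcons, ?_, fun A hA hne hproper => ?_⟩
  · have hverts : P.degree P.verts ≤ 4 + sixNorm (P.demand P.verts) := hP.tight_verts
    have hv_erase := notMem_erase v P.verts
    change (Q.restrict (P.verts.erase v) 1).degree (P.verts.erase v) ≤
      4 + sixNorm (Q.demand (P.verts.erase v))
    rwa [degree_restrict Subset.rfl, hPQ.demand_eq, ← sixNorm_demand_insert hv_erase ht,
      ← hPQ.consistent.degree_insert_of_degree_eq_zero hvQ hQ hv_erase, insert_erase hv,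
      hPQ.degree_verts]
  · have hrestrict : (Q.restrict (P.verts.erase v) 1).degree A = Q.degree A := degree_restrict hA
    change 4 + sixNorm (Q.demand A) ≤ _
    rw [hrestrict, hPQ.demand_eq]
    exact hs.le_degree_of_isSplitting hP hv ht hPQ hQ hA hne hproper

/-- All edges and stubs at a vertex of degree four with target zero can be split off in pairs,
which isolates the vertex. -/
theorem Strict.solvable_of_zero_vertex (hs : P.Strict) (hP : P.Admissible) (ih : P.SolvableBelow)
    (hcard : 2 < #P.verts) (hv : v ∈ P.verts) (hdeg : P.degree {v} = 4) (ht : 6 ∣ P.target v) :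
    P.Solvable := by
  have hstubs := hs.two_mul_stubs_le hP hcard hv ht
  obtain ⟨Q, hPQ⟩ := exists_isSplitting (k := 2) hP.toConsistent hv hdeg (by omega)
  have hQ : Q.degree {v} = 0 := by rw [hPQ.degree_self, hdeg]; norm_num
  refine hPQ.solvable (solvable_of_restrict (A := P.verts.erase v) (σ := 1) (fun u hu => ?_)
    (ih _ (size_lt_of_card_verts_lt (card_erase_lt_of_mem hv))
      (hs.admissible_restrict_erase hP hv ht hPQ hQ)))
  obtain rfl : u = v := by
    rw [hPQ.verts_eq, mem_sdiff, mem_erase] at hu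
    tauto
  rwa [hPQ.consistent.residual_of_degree_eq_zero (mem_sdiff.1 hu).1 hQ, ← demand_singleton,
    hPQ.demand_eq, demand_singleton]

end ZeroVertex

section EmitAbsorb

/-- The vertex `v` keeps the required degree when an edge at `v` is directed away from `v` and
deleted. -/
def CanEmit (P : StubGraph V E) (v : V) : Prop := 5 + sixNorm (P.target v - 1) ≤ P.degree {v}

/-- The vertex `v` keeps the required degree when an edge at `v` is directed towards `v` and
deleted. -/
def CanAbsorb (P : StubGraph V E) (v : V) : Prop := 5 + sixNorm (P.target v + 1) ≤ P.degree {v}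

/-- The vertex `v` has the least possible degree and its target is 1 or 2 modulo 6, so that `v` can
emit but cannot absorb. -/
def IsPureEmitter (P : StubGraph V E) (v : V) : Prop :=
  P.degree {v} = 4 + sixNorm (P.target v) ∧ (P.target v % 6 = 1 ∨ P.target v % 6 = 2)

theorem Admissible.le_degree_singleton (hP : P.Admissible) (hcard : 2 < #P.verts)
    (hv : v ∈ P.verts) : 4 + sixNorm (P.target v) ≤ P.degree {v} :=
  P.demand_singleton v ▸ hP.le_degree {v} (singleton_subset_iff.2 hv) (singleton_nonempty v)
    fun h => by rw [← h, card_singleton] at hcard; omega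

theorem Admissible.canEmit_or_canAbsorb (hP : P.Admissible) (hcard : 2 < #P.verts)
    (hv : v ∈ P.verts) (hzero : ¬(P.degree {v} = 4 ∧ 6 ∣ P.target v)) :
    P.CanEmit v ∨ P.CanAbsorb v := by
  have hdeg := hP.le_degree_singleton hcard hv
  have hpar := hP.two_dvd_degree_sub v hv
  unfold CanEmit CanAbsorb
  unfold sixNorm at *
  omega

theorem Admissible.isPureEmitter (hP : P.Admissible) (hcard : 2 < #P.verts) (hv : v ∈ P.verts)
    (hzero : ¬(P.degree {v} = 4 ∧ 6 ∣ P.target v)) (h : ¬P.CanAbsorb v) : P.IsPureEmitter v := by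
  have hdeg := hP.le_degree_singleton hcard hv
  have hpar := hP.two_dvd_degree_sub v hv
  unfold CanAbsorb at h
  unfold IsPureEmitter
  unfold sixNorm at *
  omega

theorem canAbsorb_neg : P.neg.CanAbsorb v ↔ P.CanEmit v := by
  have hnorm : sixNorm (-P.target v + 1) = sixNorm (P.target v - 1) := by
    rw [← sixNorm_neg, neg_add, neg_neg, sub_eq_add_neg]
  change 5 + sixNorm (-P.target v + 1) ≤ P.degree {v} ↔ _
  rw [hnorm, CanEmit]

theorem Strict.neg (hs : P.Strict) : P.neg.Strict := fun A hA hproper hcard => by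
  rw [demand_neg, sixNorm_neg]
  exact hs A hA hproper hcard

/-- Strictness leaves room for a loss of two at every set with at least two vertices. -/
theorem Strict.admissible (hs : P.Strict) (hQ : Q.Consistent) (hverts : Q.verts = P.verts)
    (htight : Q.Tight P.verts)
    (hsingle : ∀ u ∈ P.verts, 4 + sixNorm (Q.target u) ≤ Q.degree {u})
    (hlarge : ∀ A ⊆ P.verts,
      P.degree A + sixNorm (Q.demand A) ≤ Q.degree A + sixNorm (P.demand A) + 2) :
    Q.Admissible where
  toConsistent := hQ
  tight_verts := hverts ▸ htight
  le_degree A hA hne hproper := by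
    rw [hverts] at hA hproper
    rcases (Nat.succ_le_of_lt hne.card_pos).eq_or_lt with hone | hlt
    · obtain ⟨u, rfl⟩ := card_eq_one.1 hone.symm
      exact demand_singleton Q u ▸ hsingle u (singleton_subset_iff.1 hA)
    · have hstrict := hs A hA hproper hlt
      have hle := hlarge A hA
      omega

theorem Strict.solvable_of_joins (hs : P.Strict) (hP : P.Admissible) (ih : P.SolvableBelow)
    (hcard : 2 < #P.verts) (he : e ∈ P.edges) (h : P.Joins e v y δ) (hv : v ∈ P.verts)
    (hy : y ∈ P.verts) (hemit : P.CanEmit v) (habsorb : P.CanAbsorb y) : P.Solvable := by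
  classical
  have hdegree (A : Finset V) : (P.orient e δ).degree A = P.degree A - |ind A v - ind A y| := by
    rw [degree_orient he, h.abs_crossing]
  have hdemand (A : Finset V) :
      (P.orient e δ).demand A = P.demand A - (ind A v - ind A y) := by
    rw [demand_orient, h A, ← mul_assoc, ← Units.val_mul, Int.units_mul_self, Units.val_one,
      one_mul]
  refine (ih (P.orient e δ) (size_lt_of_verts_eq rfl ?_)
    (hs.admissible (hP.orient he δ) rfl ?_ (fun u hu => ?_) fun A _ => ?_)).of_orient he
  · have := card_erase_lt_of_mem he
    change 2 * #(P.edges.erase e) + _ < _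
    simp only [orient]
    omega
  · have hverts : P.degree P.verts ≤ 4 + sixNorm (P.demand P.verts) := hP.tight_verts
    simpa [Tight, hdegree, hdemand, ind, hv, hy] using hverts
  · have hdeg := hP.le_degree_singleton hcard hu
    have hu_emit : ind {u} v = 1 → 5 + sixNorm (P.target u - 1) ≤ P.degree {u} :=
      fun huv => ind_singleton_eq_one.1 huv ▸ hemit
    have hu_absorb : ind {u} y = 1 → 5 + sixNorm (P.target u + 1) ≤ P.degree {u} :=
      fun huy => ind_singleton_eq_one.1 huy ▸ habsorb
    have hv_ind := ind_eq_zero_or_one {u} v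
    have hy_ind := ind_eq_zero_or_one {u} y
    rw [← demand_singleton, hdegree, hdemand, demand_singleton, Int.abs_eq_natAbs]
    unfold sixNorm at *
    omega
  · have hv_ind := ind_eq_zero_or_one A v
    have hy_ind := ind_eq_zero_or_one A y
    rw [hdegree, hdemand, Int.abs_eq_natAbs]
    unfold sixNorm
    omega

theorem Joins.symm (h : P.Joins e v y δ) : P.Joins e y v (-δ) := fun A => by
  rw [h A]; push_cast; ring

theorem Admissible.exists_joins (hP : P.Admissible) (hA : A ⊆ P.verts) (hne : A.Nonempty)
    (hproper : A ≠ P.verts) :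
    ∃ e ∈ P.edges, ∃ v ∈ A, ∃ y ∈ P.verts \ A, ∃ δ, P.Joins e v y δ := by
  obtain ⟨e, he, heA⟩ :=
    exists_crossing_ne_zero (zero_lt_two.trans_le (hP.two_le_cutSize hA hne hproper))
  exact ⟨e, he, hP.toConsistent.exists_joins he heA⟩

theorem Admissible.exists_joins_canEmit_canAbsorb (hP : P.Admissible)
    (hall : ∀ u ∈ P.verts, P.CanEmit u ∨ P.CanAbsorb u) (hcard : 2 < #P.verts)
    (hemit : ∃ u ∈ P.verts, P.CanEmit u) (habsorb : ∃ u ∈ P.verts, P.CanAbsorb u) :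
    ∃ e ∈ P.edges, ∃ v ∈ P.verts, ∃ y ∈ P.verts, ∃ δ,
      P.Joins e v y δ ∧ P.CanEmit v ∧ P.CanAbsorb y := by
  classical
  by_cases hS : {u ∈ P.verts | P.CanEmit u} = P.verts
  · obtain ⟨y, hy, hyabs⟩ := habsorb
    obtain ⟨e, he, y', hy', v, hv, δ, h⟩ := hP.exists_joins (singleton_subset_iff.2 hy)
      (singleton_nonempty y) fun h => by rw [← h, card_singleton] at hcard; omega
    obtain rfl := mem_singleton.1 hy'
    have hv := (mem_sdiff.1 hv).1
    exact ⟨e, he, v, hv, y', hy, -δ, h.symm, filter_eq_self.1 hS v hv, hyabs⟩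
  · obtain ⟨e, he, v, hv, y, hy, δ, h⟩ :=
      hP.exists_joins (filter_subset _ _) (filter_nonempty_iff.2 hemit) hS
    obtain ⟨hv, hvemit⟩ := mem_filter.1 hv
    obtain ⟨hy, hyS⟩ := mem_sdiff.1 hy
    exact ⟨e, he, v, hv, y, hy, δ, h, hvemit,
      (hall y hy).resolve_left fun hyemit => hyS (mem_filter.2 ⟨hy, hyemit⟩)⟩

end EmitAbsorb

section PureEmitters

theorem Strict.solvable_of_neg_stubs_lt (hs : P.Strict) (hP : P.Admissible)
    (ih : P.SolvableBelow) (hall : ∀ u ∈ P.verts, P.IsPureEmitter u) (hv : v ∈ P.verts)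
    (h : -P.stubs v < P.stubFlow v) : P.Solvable := by
  have habs := abs_le.1 (hP.abs_stubFlow_le v hv)
  have hpar := hP.two_dvd_stubs_sub v hv
  have hQ : (P.addStubs v (-1) (-1)).Consistent :=
    hP.addStubs (by decide) (abs_le.2 (by omega))
  refine (ih (P.addStubs v (-1) (-1)) (size_lt_of_verts_eq rfl ?_)
    (hs.admissible hQ rfl ?_ (fun u hu => ?_) fun A _ => ?_)).of_addStubs
  · have hle := single_le_sum (fun u hu => hP.stubs_nonneg hu) hv
    simp only [addStubs, sum_add_distrib, ← mul_sum, sum_ind_singleton, ind_of_mem hv]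
    omega
  · have hverts : P.degree P.verts ≤ 4 + sixNorm (P.demand P.verts) := hP.tight_verts
    rw [Tight, degree_addStubs, demand_addStubs, ind_of_mem hv]
    unfold sixNorm at *
    omega
  · obtain ⟨hdeg, htarget⟩ := hall u hu
    rw [← demand_singleton, degree_addStubs, demand_addStubs, demand_singleton, hdeg]
    rcases ind_eq_zero_or_one {u} v with h | h <;> rw [h] <;> unfold sixNorm <;> omega
  · rw [degree_addStubs, demand_addStubs]
    rcases ind_eq_zero_or_one A v with h | h <;> rw [h] <;> unfold sixNorm <;> omega

section ExchangeEdge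

variable [DecidableEq E]

/-- The graph obtained by directing the edge `e` towards its end `v` and attaching to `v` a stub
that is accounted as three units of outflow. Here `δ` is the sign for which `P.Joins e v y δ`. If
there are stubs at `v` and all of them point inwards, then three units keep
`|stubFlow v| ≤ stubs v`; the target `t` of `v` becomes `t + 4`, so that `1` and `2` turn into `-1`
and `0` modulo 6. -/
def exchangeEdge (P : StubGraph V E) (e : E) (v : V) (δ : ℤˣ) : StubGraph V E :=
  (P.orient e (-δ)).addStubs v 1 3

theorem Joins.degree_exchangeEdge (h : P.Joins e v y δ) (he : e ∈ P.edges) (A : Finset V) :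
    (P.exchangeEdge e v δ).degree A = P.degree A - |ind A v - ind A y| + ind A v := by
  rw [exchangeEdge, degree_addStubs, degree_orient he, h.abs_crossing, one_mul]

theorem Joins.demand_exchangeEdge (h : P.Joins e v y δ) (A : Finset V) :
    (P.exchangeEdge e v δ).demand A = P.demand A + 4 * ind A v - ind A y := by
  rw [exchangeEdge, demand_addStubs, demand_orient, h A]
  rcases Int.units_eq_one_or δ with rfl | rfl <;> push_cast <;> ring

theorem Consistent.exchangeEdge (hP : P.Consistent) (he : e ∈ P.edges)
    (hflow : P.stubFlow v = -P.stubs v) (hpos : 0 < P.stubs v) (δ : ℤˣ) :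
    (P.exchangeEdge e v δ).Consistent := by
  refine (hP.orient he _).addStubs (by decide) ?_
  change |P.stubFlow v + 3| ≤ P.stubs v + 1
  exact abs_le.2 (by omega)

theorem size_exchangeEdge_lt (hP : P.Consistent) (he : e ∈ P.edges) (hv : v ∈ P.verts) (δ : ℤˣ) :
    (P.exchangeEdge e v δ).size < P.size := by
  refine size_lt_of_verts_eq rfl ?_
  have hedges := card_erase_lt_of_mem he
  have hstubs := sum_nonneg fun u hu => hP.stubs_nonneg hu
  simp only [exchangeEdge, addStubs, orient, sum_add_distrib, ← mul_sum, sum_ind_singleton,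
    ind_of_mem hv]
  omega

theorem Admissible.tight_exchangeEdge (hP : P.Admissible)
    (hflow : ∀ u ∈ P.verts, P.stubFlow u = -P.stubs u) (h : P.Joins e v y δ) (he : e ∈ P.edges)
    (hv : v ∈ P.verts) (hy : y ∈ P.verts) : (P.exchangeEdge e v δ).Tight P.verts := by
  have hverts : P.degree P.verts ≤ 4 + sixNorm (P.demand P.verts) := hP.tight_verts
  have hdvd := hP.six_dvd_sum
  have hstubs := sum_nonneg fun u hu => hP.stubs_nonneg hu
  rw [sum_sub_distrib, sum_congr rfl hflow, sum_neg_distrib, ← demand] at hdvd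
  rw [Tight, h.degree_exchangeEdge he, h.demand_exchangeEdge, ind_of_mem hv, ind_of_mem hy,
    sub_self, abs_zero]
  rw [hP.degree_verts] at hverts ⊢
  unfold sixNorm at *
  omega

end ExchangeEdge

theorem Strict.solvable_of_stubs_pos (hs : P.Strict) (hP : P.Admissible) (ih : P.SolvableBelow)
    (hcard : 2 < #P.verts) (hall : ∀ u ∈ P.verts, P.IsPureEmitter u)
    (hflow : ∀ u ∈ P.verts, P.stubFlow u = -P.stubs u) (hv : v ∈ P.verts)
    (hpos : 0 < P.stubs v) : P.Solvable := by
  classical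
  obtain ⟨e, he, v', hv', y, hy, δ, h⟩ := hP.exists_joins (singleton_subset_iff.2 hv)
    (singleton_nonempty v) fun h => by rw [← h, card_singleton] at hcard; omega
  obtain rfl := mem_singleton.1 hv'
  obtain ⟨hy, hyv⟩ := mem_sdiff.1 hy
  rw [mem_singleton] at hyv
  refine (ih _ (size_exchangeEdge_lt hP.toConsistent he hv δ)
    (hs.admissible (hP.toConsistent.exchangeEdge he (hflow v' hv) hpos δ) rfl
      (hP.tight_exchangeEdge hflow h he hv hy) (fun u hu => ?_)
      fun A _ => ?_)).of_addStubs.of_orient he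
  · obtain ⟨hdeg, htarget⟩ := hall u hu
    have hv_ind := ind_eq_zero_or_one {u} v'
    have hy_ind := ind_eq_zero_or_one {u} y
    have hvy : ¬(ind {u} v' = 1 ∧ ind {u} y = 1) := fun h =>
      hyv ((ind_singleton_eq_one.1 h.2).trans (ind_singleton_eq_one.1 h.1).symm)
    rw [← demand_singleton, h.degree_exchangeEdge he, h.demand_exchangeEdge, demand_singleton,
      hdeg, Int.abs_eq_natAbs]
    unfold sixNorm
    omega
  · have hv_ind := ind_eq_zero_or_one A v'
    have hy_ind := ind_eq_zero_or_one A y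
    rw [h.degree_exchangeEdge he, h.demand_exchangeEdge, Int.abs_eq_natAbs]
    unfold sixNorm
    omega

theorem Strict.exists_stubs_pos (hs : P.Strict) (hP : P.Consistent) (hcard : 2 < #P.verts)
    (hv : v ∈ P.verts) (ht : P.degree {v} = 4 + sixNorm (P.target v))
    (hflow : ∀ u ∈ P.verts, P.stubFlow u = -P.stubs u) : ∃ u ∈ P.verts, 0 < P.stubs u := by
  by_contra! hstubs
  have hzero {u : V} (hu : u ∈ P.verts) : P.stubs u = 0 :=
    (hstubs u hu).antisymm (hP.stubs_nonneg hu)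
  have hdvd := hP.six_dvd_sum
  rw [sum_congr rfl fun u hu => by rw [hflow u hu, hzero hu, neg_zero, sub_zero],
    ← demand] at hdvd
  have hvsub := singleton_subset_iff.2 hv
  have herase := hs (P.verts \ {v}) sdiff_subset
    (by rw [sdiff_singleton_eq_erase]; exact (erase_ssubset hv).ne)
    (by rw [sdiff_singleton_eq_erase, card_erase_of_mem hv]; omega)
  have hsum := hP.degree_sdiff hvsub
  have hdemand := demand_sdiff hvsub
  rw [demand_singleton] at hdemand
  rw [hP.degree_verts, sum_eq_zero fun u hu => hzero hu] at hsum
  have hdegree := P.degree_singleton v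
  have hv0 := hzero hv
  have hnorm : sixNorm (P.demand (P.verts \ {v})) = sixNorm (P.target v) := by
    rw [← sixNorm_neg]; exact sixNorm_eq_of_dvd_sub (by omega)
  omega

theorem Strict.solvable_of_forall_not_canAbsorb (hs : P.Strict) (hP : P.Admissible)
    (ih : P.SolvableBelow) (hcard : 2 < #P.verts)
    (hzero : ∀ u ∈ P.verts, ¬(P.degree {u} = 4 ∧ 6 ∣ P.target u))
    (h : ∀ u ∈ P.verts, ¬P.CanAbsorb u) : P.Solvable := by
  have hall (u) (hu : u ∈ P.verts) : P.IsPureEmitter u :=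
    hP.isPureEmitter hcard hu (hzero u hu) (h u hu)
  by_cases hflow : ∃ u ∈ P.verts, -P.stubs u < P.stubFlow u
  · obtain ⟨u, hu, hlt⟩ := hflow
    exact hs.solvable_of_neg_stubs_lt hP ih hall hu hlt
  · push Not at hflow
    have heq (u) (hu : u ∈ P.verts) : P.stubFlow u = -P.stubs u :=
      (hflow u hu).antisymm (abs_le.1 (hP.abs_stubFlow_le u hu)).1
    obtain ⟨v, hv⟩ := card_pos.1 (by omega : 0 < #P.verts)
    obtain ⟨u, hu, hpos⟩ := hs.exists_stubs_pos hP.toConsistent hcard hv (hall v hv).1 heq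
    exact hs.solvable_of_stubs_pos hP ih hcard hall heq hu hpos

end PureEmitters

section Solvable

theorem Strict.solvable (hs : P.Strict) (hP : P.Admissible) (ih : P.SolvableBelow)
    (hcard : 2 < #P.verts) : P.Solvable := by
  by_cases hzero : ∃ v ∈ P.verts, P.degree {v} = 4 ∧ 6 ∣ P.target v
  · obtain ⟨v, hv, hdeg, ht⟩ := hzero
    exact hs.solvable_of_zero_vertex hP ih hcard hv hdeg ht
  push Not at hzero
  have hzero (v) (hv : v ∈ P.verts) : ¬(P.degree {v} = 4 ∧ 6 ∣ P.target v) :=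
    not_and.2 (hzero v hv)
  by_cases habsorb : ∃ u ∈ P.verts, P.CanAbsorb u
  · by_cases hemit : ∃ u ∈ P.verts, P.CanEmit u
    · obtain ⟨e, he, v, hv, y, hy, δ, h, hvemit, hyabsorb⟩ := hP.exists_joins_canEmit_canAbsorb
        (fun u hu => hP.canEmit_or_canAbsorb hcard hu (hzero u hu)) hcard hemit habsorb
      exact hs.solvable_of_joins hP ih hcard he h hv hy hvemit hyabsorb
    · push Not at hemit
      refine (hs.neg.solvable_of_forall_not_canAbsorb hP.neg ih hcard (fun u hu h => ?_)
        fun u hu h => hemit u hu (canAbsorb_neg.1 h)).of_neg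
      exact hzero u hu ⟨h.1, (dvd_neg (α := ℤ)).1 h.2⟩
  · push Not at habsorb
    exact hs.solvable_of_forall_not_canAbsorb hP ih hcard hzero habsorb

theorem Admissible.solvable (hP : P.Admissible) : P.Solvable := by
  induction hsize : P.size using WellFoundedLT.induction generalizing P with
  | ind s ih =>
    subst hsize
    have ih : P.SolvableBelow := fun Q hlt hQ => ih _ hlt hQ rfl
    rcases le_or_gt #P.verts 2 with hsmall | hcard
    · exact hP.solvable_of_card_verts_le_two hsmall
    by_cases hs : P.Strict
    · exact hs.solvable hP ih hcard
    · simp only [Strict, not_forall] at hs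
      obtain ⟨A, hA, hproper, hAcard, hA'⟩ := hs
      refine hP.solvable_of_tight ih hA hproper hAcard (not_not.1 fun ht => hA' ?_)
      exact hP.six_add_le_degree hA ht

end Solvable

end StubGraph

/-! ### Critical sets and orientations of multigraphs -/

namespace Multigraph

section Cuts

variable {V E : Type} [Fintype V] [DecidableEq V] [Fintype E] {G : Multigraph V E}
  {A B : Finset V} {k : ℕ}

theorem cut_compl (G : Multigraph V E) (A : Finset V) : G.cut Aᶜ = G.cut A := by
  simp only [cut, mem_compl, not_iff_not]

theorem card_cut_inter_add_card_cut_union_le {V : Type} [DecidableEq V] (G : Multigraph V E)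
    (A B : Finset V) : #(G.cut (A ∩ B)) + #(G.cut (A ∪ B)) ≤ #(G.cut A) + #(G.cut B) := by
  simp only [cut, card_filter, ← sum_add_distrib, mem_inter, mem_union]
  refine sum_le_sum fun e _ => ?_
  by_cases hfA : G.fst e ∈ A <;> by_cases hsA : G.snd e ∈ A <;> by_cases hfB : G.fst e ∈ B <;>
    by_cases hsB : G.snd e ∈ B <;> simp [hfA, hsA, hfB, hsB]

theorem cut_union_eq_empty {V : Type} [DecidableEq V] {G : Multigraph V E} {A B : Finset V}
    (hAB : Disjoint A B) (h : G.cut A = G.cut B) : G.cut (A ∪ B) = ∅ := by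
  ext e
  have he := Finset.ext_iff.1 h e
  have hf : G.fst e ∈ A → G.fst e ∉ B := fun h => disjoint_left.1 hAB h
  have hs : G.snd e ∈ A → G.snd e ∉ B := fun h => disjoint_left.1 hAB h
  simp only [cut, mem_filter_univ, mem_union, notMem_empty, iff_false] at he ⊢
  tauto

theorem exists_criticalSet_subset (hne : A.Nonempty) (hproper : A ≠ univ)
    (hcut : #(G.cut A) ≤ k) : ∃ C ⊆ A, G.CriticalSet k C := by
  obtain ⟨C, hCA, ⟨hCne, hCproper, hC⟩, hmin⟩ := exists_minimal_le_of_wellFoundedLT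
    (fun C : Finset V => C.Nonempty ∧ C ≠ univ ∧ #(G.cut C) ≤ k) A ⟨hne, hproper, hcut⟩
  refine ⟨C, hCA, hCne, hCproper, hC, fun B hB hBC => not_le.1 fun hBk => ?_⟩
  exact hBC.not_subset (hmin ⟨hB, (hBC.trans_subset (subset_univ C)).ne, hBk⟩ hBC.subset)

theorem CriticalSet.card_cut_eq (hA : G.CriticalSet k A) (hG : G.EdgeConnected k) :
    #(G.cut A) = k :=
  hA.2.2.1.antisymm (hG A hA.1 hA.2.1)

/-- If the union of two crossing critical sets is everything, then the complement of one of them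
is a proper subset of the other; otherwise submodularity applies. -/
theorem CriticalSet.disjoint (hA : G.CriticalSet k A) (hB : G.CriticalSet k B)
    (hG : G.EdgeConnected k) (hAB : A ≠ B) : Disjoint A B := by
  wlog hnot : ¬A ⊆ B generalizing A B
  · exact (this hB hA hAB.symm fun h => hAB ((not_not.1 hnot).antisymm h)).symm
  by_contra hdisj
  obtain ⟨v, hv⟩ : (A ∩ B).Nonempty := not_disjoint_iff_nonempty_inter.1 hdisj
  by_cases hunion : A ∪ B = univ
  · have hcompl : Bᶜ ⊆ A := fun u hu =>
      (mem_union.1 (hunion ▸ mem_univ u)).resolve_right (mem_compl.1 hu)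
    have hssubset : Bᶜ ⊂ A := hcompl.ssubset_of_ne fun h =>
      mem_compl.1 (h ▸ (mem_inter.1 hv).1) (mem_inter.1 hv).2
    have hlt := hA.2.2.2 _ (compl_ne_univ_iff_nonempty _ |>.1 (by simpa using hB.2.1)) hssubset
    rw [cut_compl, hB.card_cut_eq hG] at hlt
    exact hlt.false
  · have hlt := hA.2.2.2 _ ⟨v, hv⟩
      (inter_subset_left.ssubset_of_ne fun h => hnot (inter_eq_left.1 h))
    have hle := hG _ (hA.1.mono subset_union_left) hunion
    have hsubmodular := G.card_cut_inter_add_card_cut_union_le A B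
    rw [hA.card_cut_eq hG, hB.card_cut_eq hG] at hsubmodular
    omega

theorem EdgeConnected.union_eq_univ_of_cut_eq (hG : G.EdgeConnected k) (hk : 0 < k)
    (hA : A.Nonempty) (hAB : Disjoint A B) (h : G.cut A = G.cut B) : A ∪ B = univ := by
  by_contra hunion
  have hle := hG _ (hA.mono subset_union_left) hunion
  rw [cut_union_eq_empty hAB h, card_empty] at hle
  omega

/-- Two critical sets with the same cut partition the vertex set and are then the only ones. -/
theorem EdgeConnected.card_le_of_forall_criticalSet [DecidableEq E] (hG : G.EdgeConnected k)
    (hk : 0 < k) {M : Finset (Finset V)} (hM : ∀ A ∈ M, G.CriticalSet k A) :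
    #M ≤ max 2 #(G.kCuts k) := by
  by_cases hinj : Set.InjOn G.cut M
  · refine (card_le_card_of_injOn G.cut (fun A hA => ?_) hinj).trans (le_max_right _ _)
    exact mem_image_of_mem _ ((mem_filter_univ A).2
      ⟨(hM A hA).1, (hM A hA).2.1, (hM A hA).card_cut_eq hG⟩)
  · simp only [Set.InjOn, not_forall, mem_coe] at hinj
    obtain ⟨A, hA, B, hB, hcut, hAB⟩ := hinj
    have hunion := hG.union_eq_univ_of_cut_eq hk (hM A hA).1
      ((hM A hA).disjoint (hM B hB) hG hAB) hcut
    have hsubset : M ⊆ {A, B} := fun C hC => by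
      by_contra hnot
      simp only [mem_insert, mem_singleton, not_or] at hnot
      obtain ⟨v, hv⟩ := (hM C hC).1
      rcases mem_union.1 (hunion ▸ mem_univ v) with h | h
      · exact disjoint_left.1 ((hM C hC).disjoint (hM A hA) hG hnot.1) hv h
      · exact disjoint_left.1 ((hM C hC).disjoint (hM B hB) hG hnot.2) hv h
    exact ((card_le_card hsubset).trans card_le_two).trans (le_max_left _ _)

theorem EdgeConnected.exists_transversal [DecidableEq E] (hG : G.EdgeConnected k) (hk : 0 < k) :
    ∃ R : Finset V, #R ≤ max 2 #(G.kCuts k) ∧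
      ∀ A : Finset V, A.Nonempty → A ≠ univ → #(G.cut A) ≤ k → (A ∩ R).Nonempty := by
  classical
  let M : Finset (Finset V) := {A | G.CriticalSet k A}
  have hM {A : Finset V} : A ∈ M ↔ G.CriticalSet k A := mem_filter_univ A
  choose r hr using fun A : M => (hM.1 A.2).1
  refine ⟨M.attach.image r, ?_, fun A hne hproper hcut => ?_⟩
  · exact (card_image_le.trans_eq card_attach).trans
      (hG.card_le_of_forall_criticalSet hk fun A hA => hM.1 hA)
  · obtain ⟨C, hCA, hC⟩ := exists_criticalSet_subset hne hproper hcut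
    exact ⟨r ⟨C, hM.2 hC⟩, mem_inter.2 ⟨hCA (hr _), mem_image_of_mem r (mem_attach _ _)⟩⟩

end Cuts

section Orientations

open StubGraph

variable {V E : Type} [Fintype V] [DecidableEq V] [Fintype E] {G : Multigraph V E}
  {R R' : Finset V} {β : V → ZMod 3}

/-- The stub graph that encodes the search for a `β`-orientation of `G` when a stub is attached to
every vertex of `R`, directed outwards at the vertices of `R'` and inwards at the others. The
target is congruent to `β` modulo 3 and to the degree modulo 2, up to the flow in the stubs. -/
def stubGraph (G : Multigraph V E) (β : V → ZMod 3) (R R' : Finset V) : StubGraph V E where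
  verts := univ
  edges := univ
  fst := G.fst
  snd := G.snd
  stubs := ind R
  stubFlow v := 2 * ind R' v - ind R v
  target v := 3 * ∑ e, (ind {v} (G.fst e) - ind {v} (G.snd e)) + 4 * (β v).val +
    (2 * ind R' v - ind R v)

theorem cutSize_stubGraph (G : Multigraph V E) (β : V → ZMod 3) (R R' A : Finset V) :
    (G.stubGraph β R R').cutSize A = #(G.cut A) := by
  rw [cut, card_filter, cutSize]
  push_cast
  refine sum_congr rfl fun e _ => ?_
  by_cases hf : G.fst e ∈ A <;> by_cases hs : G.snd e ∈ A <;>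
    simp [crossing, stubGraph, ind, hf, hs]

theorem residual_stubGraph (G : Multigraph V E) (β : V → ZMod 3) (R R' : Finset V) (σ : E → ℤˣ)
    (A : Finset V) : (G.stubGraph β R R').residual σ A =
      3 * (G.stubGraph β R R').netFlow 1 A + 4 * ∑ v ∈ A, ((β v).val : ℤ) -
        (G.stubGraph β R R').netFlow σ A := by
  rw [StubGraph.residual, netFlow_eq_sum _ 1]
  simp [stubGraph, netFlow, crossing, sum_add_distrib, ← mul_sum]

theorem three_dvd_sum_val {V : Type} [Fintype V] {β : V → ZMod 3} (hβ : IsBoundary β) :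
    (3 : ℤ) ∣ ∑ v, ((β v).val : ℤ) := by
  have hcast : ((∑ v, ((β v).val : ℤ) : ℤ) : ZMod 3) = 0 := by
    simpa [IsBoundary] using hβ
  exact (ZMod.intCast_zmod_eq_zero_iff_dvd _ 3).1 hcast

theorem consistent_stubGraph (G : Multigraph V E) (hβ : IsBoundary β) (hR : R' ⊆ R) :
    (G.stubGraph β R R').Consistent where
  fst_mem _ _ := mem_univ _
  snd_mem _ _ := mem_univ _
  abs_stubFlow_le v _ := by
    change |2 * ind R' v - ind R v| ≤ ind R v
    by_cases hv' : v ∈ R'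
    · simp [ind, hv', hR hv']
    · by_cases hv : v ∈ R <;> simp [ind, hv, hv']
  two_dvd_stubs_sub v _ := by
    change 2 ∣ ind R v - (2 * ind R' v - ind R v)
    omega
  two_dvd_degree_sub v _ := by
    have hpar := two_dvd_cutSize_sub_netFlow (G.stubGraph β R R') 1 {v}
    have htarget : (G.stubGraph β R R').target v = 3 * (G.stubGraph β R R').netFlow 1 {v} +
        4 * (β v).val + (2 * ind R' v - ind R v) := by
      simp [stubGraph, netFlow, crossing]
    have hstubs : (G.stubGraph β R R').stubs v = ind R v := rfl
    rw [degree_singleton, htarget, hstubs]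
    omega
  six_dvd_sum := by
    have hflow : (G.stubGraph β R R').netFlow 1 univ = 0 :=
      sum_eq_zero fun e _ => by simp [crossing, ind]
    have hres := G.residual_stubGraph β R R' 1 univ
    have hsum := three_dvd_sum_val hβ
    rw [StubGraph.residual, hflow] at hres
    change 6 ∣ ∑ v, ((G.stubGraph β R R').target v - (G.stubGraph β R R').stubFlow v)
    omega

theorem degree_stubGraph (G : Multigraph V E) (β : V → ZMod 3) (R R' A : Finset V) :
    (G.stubGraph β R R').degree A = #(G.cut A) + #(A ∩ R) := by
  rw [StubGraph.degree, cutSize_stubGraph, ← sum_ind]; rfl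

/-- With `min 5 #R` outgoing stubs, the net flow in the stubs is `2 * min 5 #R - #R`, whose
distance from the multiples of six is at least `#R - 4` as long as `#R ≤ 7`. -/
theorem admissible_stubGraph (hβ : IsBoundary β) (hR : R' ⊆ R) (hR' : #R' = min 5 #R)
    (hcard : #R ≤ 7)
    (h : ∀ A : Finset V, A.Nonempty → A ≠ univ → 6 ≤ #(G.cut A) + #(A ∩ R)) :
    (G.stubGraph β R R').Admissible where
  toConsistent := G.consistent_stubGraph hβ hR
  tight_verts := by
    have hdegree : (G.stubGraph β R R').degree univ = #R := by
      rw [degree_stubGraph, univ_inter]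
      simp [cut]
    have hflow : ∑ v, (G.stubGraph β R R').stubFlow v = 2 * #R' - #R := by
      simp only [stubGraph, sum_sub_distrib, ← mul_sum, sum_ind, univ_inter]
    have hdemand := (G.consistent_stubGraph hβ hR).six_dvd_sum
    rw [sum_sub_distrib] at hdemand
    change 6 ∣ (G.stubGraph β R R').demand univ - ∑ v, (G.stubGraph β R R').stubFlow v at hdemand
    change (G.stubGraph β R R').degree univ ≤ 4 + sixNorm ((G.stubGraph β R R').demand univ)
    rw [hdegree, sixNorm_eq_of_dvd_sub hdemand, hflow]
    unfold sixNorm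
    omega
  le_degree A _ hne hproper := by
    have hpar := (G.consistent_stubGraph hβ hR).two_dvd_degree_sub_demand (subset_univ A)
    have hle := h A hne hproper
    rw [degree_stubGraph] at hpar ⊢
    unfold sixNorm
    omega

theorem outDeg_sub_inDeg (G : Multigraph V E) (β : V → ZMod 3) (R R' : Finset V) (σ : E → ℤˣ)
    (v : V) :
    G.outDeg (fun e => decide (σ e = 1)) v - G.inDeg (fun e => decide (σ e = 1)) v =
      (G.stubGraph β R R').netFlow σ {v} := by
  rw [outDeg, inDeg, card_filter, card_filter]
  push_cast
  rw [← sum_sub_distrib]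
  refine sum_congr rfl fun e _ => ?_
  rcases Int.units_eq_one_or (σ e) with h | h <;>
    simp [h, tail, head, crossing, stubGraph, ind]

/-- If the attached vertex is joined to `R`, then the hypothesis says that the enlarged graph is
6-edge-connected. -/
theorem z3Connected_of_six_le (hcard : #R ≤ 7)
    (h : ∀ A : Finset V, A.Nonempty → A ≠ univ → 6 ≤ #(G.cut A) + #(A ∩ R)) :
    G.Z3Connected := by
  intro β hβ
  obtain ⟨R', hR', hcard'⟩ := exists_subset_card_eq (min_le_right 5 #R)
  obtain ⟨σ, hσ⟩ := (admissible_stubGraph hβ hR' hcard' hcard h).solvable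
  refine ⟨fun e => decide (σ e = 1), fun v => ?_⟩
  have hres := hσ v (mem_univ v)
  rw [residual_stubGraph, sum_singleton] at hres
  have hdvd : (3 : ℤ) ∣ (G.stubGraph β R R').netFlow σ {v} - (β v).val := by omega
  have hcast := (ZMod.intCast_zmod_eq_zero_iff_dvd _ 3).2 hdvd
  rw [Int.cast_sub, sub_eq_zero] at hcast
  rw [outDeg_sub_inDeg G β R R', hcast]
  simp

end Orientations

/-- Every 5-edge-connected graph with at most seven edge-cuts of size 5 is
`ℤ₃`-connected. -/
theorem stmt_18 {V E : Type} [Fintype V] [DecidableEq V] [Fintype E] [DecidableEq E] (G : Multigraph V E)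
    (h5 : G.EdgeConnected 5) (hc : (G.kCuts 5).card ≤ 7) :
    G.Z3Connected := by
  obtain ⟨R, hcard, hmeet⟩ := h5.exists_transversal (by norm_num)
  refine z3Connected_of_six_le (R := R) (by omega) fun A hne hproper => ?_
  have hfive := h5 A hne hproper
  by_cases hcut : #(G.cut A) ≤ 5
  · have hpos := (hmeet A hne hproper hcut).card_pos
    omega
  · omega

end Multigraph
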